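/- arXiv:2209.07927 — 2 statements merged into one kernel-verified Lean document; each statement's English description precedes it below -/
import Mathlib

section
/- Let q be a prime power and n a positive integer, and let σ and τ be compositions of n. Suppose Y is a subset of GL(n,q) that is transitive on σ-flags. If σ̃ ⊴ τ̃, where σ̃ and τ̃ are the partitions obtained from σ and τ by rearranging their parts in nonincreasing order, then Y is also transitive on τ-flags. -/
open Module

/-- The linear automorphism of `F_q^n` induced by `g ∈ GL(n,q)`. -/
def glMap (F : Type) [Field F] {n : ℕ} (g : GL (Fin n) F) : (Fin n → F) →ₗ[F] (Fin n → F) :=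
  Matrix.mulVecLin (g : Matrix (Fin n) (Fin n) F)

/-- A `ρ`-flag for a composition `ρ = (ρ_1,…,ρ_k)` of `n`: a chain of subspaces
`{0} = V_0 ≤ V_1 ≤ ⋯ ≤ V_k = F_q^n` with `dim(V_i/V_{i−1}) = ρ_i` for each `i`. -/
structure RhoFlag (F : Type) [Field F] (n : ℕ) (ρ : Composition n) where
  V : Fin (ρ.length + 1) → Submodule F (Fin n → F)
  mono : Monotone V
  bot_eq : V 0 = ⊥
  top_eq : V (Fin.last ρ.length) = ⊤
  dim : ∀ i : Fin ρ.length,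
    finrank F (V i.succ) = finrank F (V i.castSucc) + ρ.blocksFun i

/-- `g ∈ GL(n,q)` maps the `ρ`-flag `A` to the `ρ`-flag `B`. -/
def MapsFlag (F : Type) [Field F] {n : ℕ} {ρ : Composition n} (g : GL (Fin n) F)
    (A B : RhoFlag F n ρ) : Prop :=
  ∀ j, Submodule.map (glMap F g) (A.V j) = B.V j

/-- A subset `Y` of `GL(n,q)` is transitive on `ρ`-flags: there is a constant `r` such that
for all `ρ`-flags `A`, `B` there are exactly `r` elements `g ∈ Y` mapping `A` to `B`. -/
def TransitiveOnFlags (F : Type) [Field F] [Fintype F] {n : ℕ} (Y : Set (GL (Fin n) F))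
    (ρ : Composition n) : Prop :=
  ∃ r : ℕ, ∀ A B : RhoFlag F n ρ,
    Nat.card {g : GL (Fin n) F // g ∈ Y ∧ MapsFlag F g A B} = r

/-- The sum of the `k` largest entries of a multiset of natural numbers (all of them if the
multiset has fewer than `k` entries). For a partition regarded as a multiset of parts, this is
the `k`-th partial sum `λ_1 + ⋯ + λ_k` of the parts arranged in nonincreasing order. -/
def kLargestSum (μ : Multiset ℕ) (k : ℕ) : ℕ :=
  ((μ.powerset.filter (fun s => Multiset.card s ≤ k)).map Multiset.sum).sup

/-- Dominance order on partitions (as multisets of parts): `μ ⊴ λ` iff for every `k` the sum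
of the `k` largest parts of `μ` is at most the sum of the `k` largest parts of `λ`. -/
def Dominates (μ lam : Multiset ℕ) : Prop :=
  ∀ k : ℕ, kLargestSum μ k ≤ kLargestSum lam k

/-!
Let `Y ⊆ G` be transitive on `Δ`, and let `R` be a `G`-invariant relation between `Ω` and `Δ` in
which all elements of `Ω` have the same degree and whose incidence map `ℤ^Ω → ℤ^Δ` is injective.
Counting the `g ∈ Y` with `R (g • a) b` determines the incidence sums of the function
`c ↦ #{g ∈ Y | g • a = c}`, hence the function itself, and `Y` is transitive on `Ω`.

This applies to flags that differ in one term, with comparability of that term as the relation. The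
term ranges over the subspaces of a quotient of its two neighbours, so the question is whether
comparability of `x`-dimensional with `z`-dimensional subspaces has an injective incidence map. By
averaging a function in the kernel over the stabilizer of a subspace `X₀`, it may be assumed to
depend only on `dim (X ∩ X₀)`, and in this parameter the incidence equations are triangular as soon
as `x` is at least as far from half the dimension as `z` is.

A permutation of the parts of a composition is a sequence of such steps. Between nonincreasing
compositions, dominance says that the sequence of dimensions of a flag increases pointwise; both
sequences are concave, and raising the smaller one by one on a maximal interval on which they
differ, term by term from left to right, uses admissible steps only and preserves concavity.
-/

section TransitiveSubsets

variable {G Ω Δ : Type*} [Group G] [MulAction G Ω] [MulAction G Δ]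

/-- A subset `Y` of a group is transitive on `Ω` if the number of `g ∈ Y` with `g • a = b` does not
depend on `a b : Ω`. -/
def IsTransitiveOn (Y : Set G) (Ω : Type*) [SMul G Ω] : Prop :=
  ∃ r : ℕ, ∀ a b : Ω, {g ∈ Y | g • a = b}.ncard = r

open scoped Classical in
/-- Injectivity of the incidence map `ℤ^Ω → ℤ^Δ` of a relation `R`, which sends `f` to the function
`b ↦ ∑ a with R a b, f a`. -/
def InjectiveIncidence {Ω Δ : Type*} [Fintype Ω] (R : Ω → Δ → Prop) : Prop :=
  ∀ f : Ω → ℤ, (∀ b, ∑ a with R a b, f a = 0) → f = 0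

theorem setOf_mem_inv_smul_eq (Y : Set G) (a b : Ω) :
    {g ∈ Y⁻¹ | g • a = b} = {g ∈ Y | g • b = a}⁻¹ := by
  ext g
  exact and_congr_right fun _ => by rw [inv_smul_eq_iff, eq_comm]

theorem IsTransitiveOn.inv {Y : Set G} (hY : IsTransitiveOn Y Ω) : IsTransitiveOn Y⁻¹ Ω := by
  obtain ⟨r, hr⟩ := hY
  exact ⟨r, fun a b => by rw [setOf_mem_inv_smul_eq, Set.ncard_inv, hr]⟩

open scoped Classical in
theorem sum_ncard_fiber {α β : Type*} [Finite α] [Fintype β] (s : Set α) (φ : α → β)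
    (P : β → Prop) : ∑ b with P b, {a ∈ s | φ a = b}.ncard = {a ∈ s | P (φ a)}.ncard := by
  have := Fintype.ofFinite α
  have hmaps : ∀ a ∈ ({a | a ∈ s ∧ P (φ a)} : Finset α), φ a ∈ ({b | P b} : Finset β) := by
    simp +contextual
  simp only [Set.ncard_eq_toFinset_card', Set.toFinset_ofPred]
  rw [Finset.card_eq_sum_card_fiberwise hmaps]
  refine Finset.sum_congr rfl fun b hb => congrArg Finset.card ?_
  ext a
  simp only [Finset.mem_filter, Finset.mem_univ, true_and] at hb ⊢
  grind

variable [Finite G] [Fintype Ω] {R : Ω → Δ → Prop}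

open scoped Classical in
theorem sum_ncard_smul_eq [Fintype Δ] (hR : ∀ (g : G) a b, R (g • a) (g • b) ↔ R a b) (Y : Set G)
    (a : Ω) (b : Δ) :
    ∑ a' with R a' b, {g ∈ Y | g • a = a'}.ncard =
      ∑ b' with R a b', {g ∈ Y | g • b' = b}.ncard := by
  have hinv : ∀ g : G, R (g • a) b ↔ R a (g⁻¹ • b) := fun g => by
    rw [← hR g a, smul_inv_smul]
  have hsmul : ∀ (g : G) b', g • b' = b ↔ g⁻¹ • b = b' := fun g b' => by
    rw [inv_smul_eq_iff, eq_comm]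
  simp only [hsmul, sum_ncard_fiber Y (· • a) (R · b), sum_ncard_fiber Y (·⁻¹ • b) (R a ·), hinv]

theorem IsTransitiveOn.ncard_smul_eq_left [Finite Δ]
    (hR : ∀ (g : G) a b, R (g • a) (g • b) ↔ R a b)
    (hinj : InjectiveIncidence R) (hdeg : ∀ a a', {b | R a b}.ncard = {b | R a' b}.ncard)
    {Y : Set G} (hY : IsTransitiveOn Y Δ) (a a' b : Ω) :
    {g ∈ Y | g • a = b}.ncard = {g ∈ Y | g • a' = b}.ncard := by
  classical
  have := Fintype.ofFinite Δ
  obtain ⟨r, hr⟩ := hY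
  have hsum : ∀ a b, ∑ c with R c b, {g ∈ Y | g • a = c}.ncard = {b | R a b}.ncard * r := by
    intro a b
    simp only [sum_ncard_smul_eq hR, hr, Finset.sum_const, smul_eq_mul,
      Set.ncard_eq_toFinset_card', Set.toFinset_ofPred]
  have hzero := hinj
    (fun c => ({g ∈ Y | g • a = c}.ncard : ℤ) - {g ∈ Y | g • a' = c}.ncard) fun b => by
      rw [Finset.sum_sub_distrib, ← Nat.cast_sum, ← Nat.cast_sum, hsum, hsum, hdeg a a', sub_self]
  exact_mod_cast sub_eq_zero.1 (congrFun hzero b)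

theorem IsTransitiveOn.of_injectiveIncidence [Finite Δ]
    (hR : ∀ (g : G) a b, R (g • a) (g • b) ↔ R a b)
    (hinj : InjectiveIncidence R) (hdeg : ∀ a a', {b | R a b}.ncard = {b | R a' b}.ncard)
    {Y : Set G} (hY : IsTransitiveOn Y Δ) : IsTransitiveOn Y Ω := by
  have hleft := hY.ncard_smul_eq_left hR hinj hdeg
  -- Passing to `Y⁻¹` interchanges source and target.
  have hright : ∀ a b b' : Ω, {g ∈ Y | g • a = b}.ncard = {g ∈ Y | g • a = b'}.ncard := by
    intro a b b'
    have := hY.inv.ncard_smul_eq_left hR hinj hdeg b b' a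
    rwa [setOf_mem_inv_smul_eq, setOf_mem_inv_smul_eq, Set.ncard_inv, Set.ncard_inv] at this
  rcases isEmpty_or_nonempty Ω with _ | ⟨⟨c⟩⟩
  · exact ⟨0, isEmptyElim⟩
  · exact ⟨{g ∈ Y | g • c = c}.ncard, fun a b => (hleft a c b).trans (hright c b c)⟩

end TransitiveSubsets

section Incidence

variable {Ω Δ Ω' Δ' : Type*} {R : Ω → Δ → Prop} {R' : Ω' → Δ' → Prop}

/-- A pair of embeddings that identifies the incidence structure `R'` with a union of connected
components of `R`: it preserves and reflects incidence, and everything incident with its image lies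
in its image. -/
structure IncidenceEmbedding (R' : Ω' → Δ' → Prop) (R : Ω → Δ → Prop) where
  left : Ω' ↪ Ω
  right : Δ' ↪ Δ
  rel_iff : ∀ a b, R (left a) (right b) ↔ R' a b
  mem_range_right : ∀ a b, R (left a) b → b ∈ Set.range right
  mem_range_left : ∀ a b, R a (right b) → a ∈ Set.range left

theorem IncidenceEmbedding.ncard_rel_left (E : IncidenceEmbedding R' R) (a : Ω') :
    {b | R (E.left a) b}.ncard = {b | R' a b}.ncard := by
  have himage : {b | R (E.left a) b} = E.right '' {b | R' a b} := by
    ext b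
    constructor
    · intro hb
      obtain ⟨b, rfl⟩ := E.mem_range_right a b hb
      exact ⟨b, (E.rel_iff a b).1 hb, rfl⟩
    · rintro ⟨b, hb, rfl⟩
      exact (E.rel_iff a b).2 hb
  rw [himage, Set.ncard_image_of_injective _ E.right.injective]

open scoped Classical in
theorem IncidenceEmbedding.apply_left_eq_zero [Fintype Ω] [Fintype Ω']
    (E : IncidenceEmbedding R' R) (hR' : InjectiveIncidence R') {f : Ω → ℤ}
    (hf : ∀ b, ∑ a with R a b, f a = 0) (a : Ω') : f (E.left a) = 0 := by
  refine congrFun (hR' (f ∘ E.left) fun b => ?_) a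
  rw [← hf (E.right b)]
  refine Finset.sum_of_injOn E.left E.left.injective.injOn (by simp [Set.MapsTo, E.rel_iff])
    (fun a ha ha' => ?_) fun _ _ => rfl
  obtain ⟨a, rfl⟩ := E.mem_range_left a b (by simpa using ha)
  exact absurd (Set.mem_image_of_mem _ (by simpa [E.rel_iff] using ha)) ha'

open scoped Classical in
theorem eq_zero_of_triangular [Fintype Ω] (ρ : Ω → ℕ)
    (htri : ∀ a, ∃ b, R a b ∧ ∀ a', R a' b → ρ a' ≤ ρ a) {f : Ω → ℤ}
    (hconst : ∀ a a', ρ a = ρ a' → f a = f a') (hf : ∀ b, ∑ a with R a b, f a = 0) (a : Ω) :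
    f a = 0 := by
  induction h : ρ a using Nat.strong_induction_on generalizing a with
  | _ i ih =>
  subst h
  obtain ⟨b, hab, hle⟩ := htri a
  have hlevel : ∑ a' with R a' b, f a' = ∑ a' with R a' b ∧ ρ a' = ρ a, f a := by
    rw [← Finset.filter_filter, Finset.sum_filter _ (fun _ => f a)]
    refine Finset.sum_congr rfl fun a' ha' => ?_
    have hle := hle a' (Finset.mem_filter.1 ha').2
    split_ifs with h
    · exact hconst a' a h
    · exact ih _ (hle.lt_of_ne h) a' rfl
  rw [hf, Finset.sum_const, eq_comm, smul_eq_zero] at hlevel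
  refine hlevel.resolve_left (Finset.card_ne_zero_of_mem (a := a) ?_)
  simp [hab]

open scoped Classical in
theorem eq_zero_of_triangular_of_fixed {H : Type*} [Group H] [Finite H] [MulAction H Ω]
    [MulAction H Δ] [Fintype Ω] (hR : ∀ (h : H) a b, R (h • a) (h • b) ↔ R a b) (ρ : Ω → ℕ)
    (horb : ∀ a a', ρ a = ρ a' → ∃ h : H, h • a = a')
    (htri : ∀ a, ∃ b, R a b ∧ ∀ a', R a' b → ρ a' ≤ ρ a) {f : Ω → ℤ}
    (hf : ∀ b, ∑ a with R a b, f a = 0) {a₀ : Ω} (ha₀ : ∀ h : H, h • a₀ = a₀) : f a₀ = 0 := by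
  have := Fintype.ofFinite H
  have havg : ∑ h : H, f (h • a₀) = 0 := by
    refine eq_zero_of_triangular (f := fun a => ∑ h : H, f (h • a)) ρ htri
      (fun a a' haa' => ?_) (fun b => ?_) a₀
    · obtain ⟨t, rfl⟩ := horb a a' haa'
      simp only [smul_smul]
      exact (Equiv.sum_comp (Equiv.mulRight t) fun h => f (h • a)).symm
    · rw [Finset.sum_comm]
      refine Finset.sum_eq_zero fun h _ => ?_
      rw [← hf (h • b)]
      exact Finset.sum_equiv (MulAction.toPerm h) (by simp [hR]) fun _ _ => rfl
  simpa [ha₀] using havg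

end Incidence

section LinearAlgebra

variable {F V W : Type*} [Field F] [AddCommGroup V] [Module F V] [AddCommGroup W] [Module F W]

theorem exists_linearEquiv_extend_of_isCompl {U C : Submodule F V} {U' C' : Submodule F W}
    (h : IsCompl U C) (h' : IsCompl U' C') (e₁ : U ≃ₗ[F] U') (e₂ : C ≃ₗ[F] C') :
    ∃ e : V ≃ₗ[F] W, (∀ u : U, e u = e₁ u) ∧ ∀ c : C, e c = e₂ c := by
  refine ⟨(U.prodEquivOfIsCompl C h).symm ≪≫ₗ (e₁.prodCongr e₂) ≪≫ₗ
    U'.prodEquivOfIsCompl C' h', fun u => ?_, fun c => ?_⟩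
  · simp
  · simp

section TwoSpaces

variable [FiniteDimensional F W]

theorem map_linearEquiv_eq_of_forall_mem {e : V ≃ₗ[F] W} {U : Submodule F V} {U' : Submodule F W}
    (hle : ∀ u ∈ U, e u ∈ U') (hU : finrank F U = finrank F U') :
    U.map (e : V →ₗ[F] W) = U' := by
  apply Submodule.eq_of_le_of_finrank_eq
  · rintro _ ⟨u, hu, rfl⟩
    exact hle u hu
  · rw [LinearEquiv.finrank_map_eq, hU]

variable [FiniteDimensional F V]

theorem exists_linearEquiv_map_eq (U : Submodule F V) (U' : Submodule F W)
    (hV : finrank F V = finrank F W) (hU : finrank F U = finrank F U') :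
    ∃ e : V ≃ₗ[F] W, U.map (e : V →ₗ[F] W) = U' := by
  obtain ⟨C, hC⟩ := U.exists_isCompl
  obtain ⟨C', hC'⟩ := U'.exists_isCompl
  have hdim := Submodule.finrank_add_eq_of_isCompl hC
  have hdim' := Submodule.finrank_add_eq_of_isCompl hC'
  obtain ⟨e, he, -⟩ := exists_linearEquiv_extend_of_isCompl hC hC' (LinearEquiv.ofFinrankEq _ _ hU)
    (LinearEquiv.ofFinrankEq _ _ (by omega))
  refine ⟨e, map_linearEquiv_eq_of_forall_mem (fun u hu => ?_) hU⟩
  rw [he ⟨u, hu⟩]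
  exact Subtype.prop _

theorem exists_linearEquiv_of_le {P U : Submodule F V} {P' U' : Submodule F W} (hUP : U ≤ P)
    (hUP' : U' ≤ P') (hP : finrank F P = finrank F P') (hU : finrank F U = finrank F U') :
    ∃ e : P ≃ₗ[F] P', ∀ u : P, (u : V) ∈ U → (e u : W) ∈ U' := by
  obtain ⟨e, he⟩ := exists_linearEquiv_map_eq (U.comap P.subtype) (U'.comap P'.subtype) hP (by
    rw [(Submodule.comapSubtypeEquivOfLe hUP).finrank_eq,
      (Submodule.comapSubtypeEquivOfLe hUP').finrank_eq, hU])
  exact ⟨e, fun u hu => he.le (Submodule.mem_map_of_mem (f := (e : P →ₗ[F] P')) hu)⟩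

end TwoSpaces

variable [FiniteDimensional F V]

theorem exists_submodule_between {X D : Submodule F V} (h : X ≤ D) {z : ℕ}
    (hX : finrank F X ≤ z) (hD : z ≤ finrank F D) :
    ∃ Z : Submodule F V, X ≤ Z ∧ Z ≤ D ∧ finrank F Z = z := by
  induction z, hX using Nat.le_induction with
  | base => exact ⟨X, le_rfl, h, rfl⟩
  | succ z hz ih =>
    obtain ⟨Z, hXZ, hZD, rfl⟩ := ih (by omega)
    have hlt : Z < D := lt_of_le_of_ne hZD (by rintro rfl; omega)
    obtain ⟨v, hvD, hvZ⟩ := SetLike.exists_of_lt hlt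
    refine ⟨Z ⊔ Submodule.span F {v}, hXZ.trans le_sup_left, sup_le hZD (by simpa using hvD), ?_⟩
    exact Submodule.finrank_sup_span_singleton hvZ

theorem exists_disjoint_sup_eq_finrank {A B : Submodule F V} (hAB : A ≤ B) :
    ∃ C : Submodule F V, Disjoint A C ∧ A ⊔ C = B ∧ finrank F B = finrank F A + finrank F C := by
  obtain ⟨C, hdisj, hsup⟩ := IsModularLattice.exists_disjoint_and_sup_eq hAB
  have hdim := Submodule.finrank_sup_add_finrank_inf_eq A C
  rw [hsup, hdisj.eq_bot, finrank_bot] at hdim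
  exact ⟨C, hdisj, hsup, hdim⟩

theorem exists_isCompl_and_inf_sup_eq (X X₀ : Submodule F V) :
    ∃ C D : Submodule F V, C ≤ D ∧ IsCompl X₀ D ∧ (X ⊓ X₀) ⊔ C = X ∧
      finrank F X = finrank F ↥(X ⊓ X₀) + finrank F C := by
  obtain ⟨C, hdisj, hsup, hdim⟩ := exists_disjoint_sup_eq_finrank (inf_le_left : X ⊓ X₀ ≤ X)
  have hCX : C ≤ X := hsup ▸ le_sup_right
  have hdisj₀ : Disjoint C X₀ := by
    rw [inf_comm, disjoint_assoc, inf_eq_right.2 hCX] at hdisj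
    exact hdisj.symm
  obtain ⟨D, hCD, hD⟩ := hdisj₀.exists_isCompl
  exact ⟨C, D, hCD, hD.symm, hsup, hdim⟩

theorem exists_linearEquiv_stabilizing {X₀ X X' : Submodule F V}
    (hX : finrank F X = finrank F X') (hinf : finrank F ↥(X ⊓ X₀) = finrank F ↥(X' ⊓ X₀)) :
    ∃ e : V ≃ₗ[F] V, X₀.map (e : V →ₗ[F] V) = X₀ ∧ X.map (e : V →ₗ[F] V) = X' := by
  obtain ⟨C, D, hCD, hD, hsup, hdim⟩ := exists_isCompl_and_inf_sup_eq X X₀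
  obtain ⟨C', D', hCD', hD', hsup', hdim'⟩ := exists_isCompl_and_inf_sup_eq X' X₀
  have hDdim := Submodule.finrank_add_eq_of_isCompl hD
  have hDdim' := Submodule.finrank_add_eq_of_isCompl hD'
  obtain ⟨e₁, he₁⟩ := exists_linearEquiv_of_le (inf_le_right : X ⊓ X₀ ≤ X₀)
    (inf_le_right : X' ⊓ X₀ ≤ X₀) rfl hinf
  obtain ⟨e₂, he₂⟩ := exists_linearEquiv_of_le hCD hCD' (by omega) (by omega)
  obtain ⟨e, heX₀, heD⟩ := exists_linearEquiv_extend_of_isCompl hD hD' e₁ e₂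
  refine ⟨e, map_linearEquiv_eq_of_forall_mem (fun u hu => ?_) rfl,
    map_linearEquiv_eq_of_forall_mem (fun u hu => ?_) hX⟩
  · rw [heX₀ ⟨u, hu⟩]
    exact Subtype.prop _
  · rw [← hsup] at hu
    obtain ⟨t, ht, c, hc, rfl⟩ := Submodule.mem_sup.1 hu
    rw [map_add, heX₀ ⟨t, ht.2⟩, heD ⟨c, hCD hc⟩]
    exact X'.add_mem (he₁ _ ht).1 ((hsup' ▸ le_sup_right : C' ≤ X') (he₂ _ hc))

theorem exists_le_finrank_eq_inf_le {X X₀ : Submodule F V} {z : ℕ} (hX : finrank F X ≤ z)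
    (hz : z + finrank F X₀ ≤ finrank F V + finrank F ↥(X ⊓ X₀)) :
    ∃ Z : Submodule F V, X ≤ Z ∧ finrank F Z = z ∧ Z ⊓ X₀ ≤ X := by
  obtain ⟨C, D, hCD, hXD, hsup, hdim⟩ := exists_isCompl_and_inf_sup_eq X₀ X
  obtain ⟨E, hXE, hE⟩ := (hXD.disjoint.mono_right hCD).exists_isCompl
  have hEdim := Submodule.finrank_add_eq_of_isCompl hE
  rw [inf_comm] at hdim
  obtain ⟨Z, hXZ, hZE, hZ⟩ := exists_submodule_between hXE hX (by omega)
  have hEX₀ : E ⊓ X₀ = X₀ ⊓ X := by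
    have := sup_inf_assoc_of_le C ((inf_le_right : X₀ ⊓ X ≤ X).trans hXE)
    rwa [hsup, hE.symm.inf_eq_bot, sup_bot_eq, inf_comm] at this
  exact ⟨Z, hXZ, hZ, (inf_le_inf_right X₀ hZE).trans (hEX₀.le.trans inf_le_right)⟩

theorem exists_le_finrank_eq_le_sup {X X₀ : Submodule F V} {z : ℕ} (hX : z ≤ finrank F X)
    (hz : finrank F X ≤ z + finrank F ↥(X ⊓ X₀)) :
    ∃ Z : Submodule F V, Z ≤ X ∧ finrank F Z = z ∧ X ≤ Z ⊔ X₀ := by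
  obtain ⟨C, -, hsup, hdim⟩ := exists_disjoint_sup_eq_finrank (inf_le_left : X ⊓ X₀ ≤ X)
  obtain ⟨Z, hCZ, hZX, hZ⟩ := exists_submodule_between (hsup ▸ le_sup_right : C ≤ X) (z := z)
    (by omega) hX
  refine ⟨Z, hZX, hZ, ?_⟩
  calc X = X ⊓ X₀ ⊔ C := hsup.symm
    _ ≤ X₀ ⊔ Z := sup_le_sup inf_le_right hCZ
    _ = Z ⊔ X₀ := sup_comm _ _

theorem exists_orderIso_Icc {A B : Submodule F V} (hAB : A ≤ B) :
    ∃ (C : Submodule F V) (Ψ : Submodule F C ≃o Set.Icc A B),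
      finrank F B = finrank F A + finrank F C ∧
        ∀ X, finrank F (Ψ X : Submodule F V) = finrank F A + finrank F X := by
  obtain ⟨C, hdisj, hsup, hdim⟩ := exists_disjoint_sup_eq_finrank hAB
  have hIic : Set.Iic C = Set.Icc (C ⊓ A) C := by rw [hdisj.symm.eq_bot, Set.Icc_bot]
  have hIcc : Set.Icc A (C ⊔ A) = Set.Icc A B := by rw [sup_comm, hsup]
  -- The complement `C` of `A` in `B` plays the role of `B ⧸ A`.
  refine ⟨C, C.mapIic.trans <| (OrderIso.setCongr _ _ hIic).trans <|
    (infIccOrderIsoIccSup C A).trans <| OrderIso.setCongr _ _ hIcc, hdim, fun X => ?_⟩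
  change finrank F ↥(X.map C.subtype ⊔ A) = _
  have hX := Submodule.finrank_sup_add_finrank_inf_eq (X.map C.subtype) A
  rw [(hdisj.symm.mono_left (Submodule.map_subtype_le C X)).eq_bot, finrank_bot,
    Submodule.finrank_map_subtype_eq] at hX
  omega

end LinearAlgebra

section SubspaceOfDim

open scoped Pointwise

variable {F V W : Type*} [Field F] [AddCommGroup V] [Module F V] [AddCommGroup W] [Module F W]

section Smul

variable {G : Type*} [Group G] [DistribMulAction G V] [SMulCommClass G F V]

theorem finrank_smul_submodule (g : G) (X : Submodule F V) :
    finrank F ↥(g • X) = finrank F X :=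
  LinearEquiv.finrank_map_eq (DistribMulAction.toLinearEquiv F V g) X

theorem smul_submodule_le_smul_iff (g : G) {X Y : Submodule F V} : g • X ≤ g • Y ↔ X ≤ Y :=
  (Submodule.orderIsoMapComap (DistribMulAction.toLinearEquiv F V g)).le_iff_le

end Smul

variable (F V) in
/-- The subspaces of `V` of dimension `x`. -/
abbrev SubspaceOfDim (x : ℕ) : Type _ :=
  {X : Submodule F V // finrank F X = x}

/-- Comparability of subspaces of two given dimensions: which of the two inclusions can hold
depends only on the dimensions, so both cases are treated together. -/
def SubspaceOfDim.Comparable {x z : ℕ} (X : SubspaceOfDim F V x) (Z : SubspaceOfDim F V z) : Prop :=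
  X.1 ≤ Z.1 ∨ Z.1 ≤ X.1

namespace SubspaceOfDim

instance {G : Type*} [Group G] [DistribMulAction G V] [SMulCommClass G F V] (x : ℕ) :
    MulAction G (SubspaceOfDim F V x) where
  smul g X := ⟨g • X.1, (finrank_smul_submodule g X.1).trans X.2⟩
  one_smul X := Subtype.ext (one_smul G X.1)
  mul_smul g h X := Subtype.ext (mul_smul g h X.1)

theorem comparable_smul_smul_iff {G : Type*} [Group G] [DistribMulAction G V] [SMulCommClass G F V]
    {x z : ℕ} (g : G) (X : SubspaceOfDim F V x) (Z : SubspaceOfDim F V z) :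
    (g • X).Comparable (g • Z) ↔ X.Comparable Z :=
  or_congr (smul_submodule_le_smul_iff g) (smul_submodule_le_smul_iff g)

theorem ncard_comparable_eq [FiniteDimensional F V] [FiniteDimensional F W]
    (hVW : finrank F V = finrank F W) {x z : ℕ} (X : SubspaceOfDim F V x)
    (X' : SubspaceOfDim F W x) :
    {Z : SubspaceOfDim F V z | X.Comparable Z}.ncard =
      {Z : SubspaceOfDim F W z | X'.Comparable Z}.ncard := by
  obtain ⟨e, he⟩ := exists_linearEquiv_map_eq X.1 X'.1 hVW (X.2.trans X'.2.symm)
  let Φ := Submodule.orderIsoMapComap e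
  let φ : SubspaceOfDim F V z ≃ SubspaceOfDim F W z :=
    Φ.toEquiv.subtypeEquiv fun Z => by rw [← LinearEquiv.finrank_map_eq e Z]; rfl
  rw [← Set.ncard_image_of_injective _ φ.injective, φ.image_eq_preimage_symm]
  congr 1
  ext Z
  have hX' : X'.1 = Φ X.1 := he.symm
  change X.1 ≤ Φ.symm Z.1 ∨ Φ.symm Z.1 ≤ X.1 ↔ X'.1 ≤ Z.1 ∨ Z.1 ≤ X'.1
  rw [hX', Φ.le_symm_apply, Φ.symm_apply_le]

variable {x z : ℕ}

section FiniteDimensional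

variable [FiniteDimensional F V]

theorem Comparable.le (h : x ≤ z) {X : SubspaceOfDim F V x} {Z : SubspaceOfDim F V z}
    (hXZ : X.Comparable Z) : X.1 ≤ Z.1 :=
  hXZ.elim id fun hle =>
    (Submodule.eq_of_le_of_finrank_le hle ((X.2.trans_le h).trans_eq Z.2.symm)).ge

theorem Comparable.ge (h : z ≤ x) {X : SubspaceOfDim F V x} {Z : SubspaceOfDim F V z}
    (hXZ : X.Comparable Z) : Z.1 ≤ X.1 :=
  Comparable.le h hXZ.symm

theorem exists_comparable_forall_finrank_inf_le
    (h : (x ≤ z ∧ z + x ≤ finrank F V) ∨ (finrank F V ≤ z + x ∧ z ≤ x))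
    (X₀ X : SubspaceOfDim F V x) :
    ∃ Z : SubspaceOfDim F V z, X.Comparable Z ∧ ∀ X' : SubspaceOfDim F V x, X'.Comparable Z →
      finrank F ↥(X'.1 ⊓ X₀.1) ≤ finrank F ↥(X.1 ⊓ X₀.1) := by
  have := X.2
  have := X₀.2
  have hdim := Submodule.finrank_sup_add_finrank_inf_eq X.1 X₀.1
  rcases h with ⟨hxz, hle⟩ | ⟨hle, hzx⟩
  · obtain ⟨Z, hXZ, hZ, hinf⟩ :=
      exists_le_finrank_eq_inf_le (X := X.1) (X₀ := X₀.1) (z := z) (by omega) (by omega)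
    refine ⟨⟨Z, hZ⟩, Or.inl hXZ, fun X' hX' => Submodule.finrank_mono ?_⟩
    exact le_inf ((inf_le_inf_right _ (hX'.le hxz)).trans hinf) inf_le_right
  · have hsup := Submodule.finrank_le (X.1 ⊔ X₀.1)
    obtain ⟨Z, hZX, hZ, hXZ⟩ :=
      exists_le_finrank_eq_le_sup (X := X.1) (X₀ := X₀.1) (z := z) (by omega) (by omega)
    refine ⟨⟨Z, hZ⟩, Or.inr hZX, fun X' hX' => ?_⟩
    have hmono : X.1 ⊔ X₀.1 ≤ X'.1 ⊔ X₀.1 :=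
      sup_le (hXZ.trans (sup_le_sup_right (hX'.ge hzx) _)) le_sup_right
    have hmono' := Submodule.finrank_mono hmono
    have hdim' := Submodule.finrank_sup_add_finrank_inf_eq X'.1 X₀.1
    have := X'.2
    omega

theorem exists_mem_stabilizer_smul_eq (X₀ : Submodule F V) (X X' : SubspaceOfDim F V x)
    (hinf : finrank F ↥(X.1 ⊓ X₀) = finrank F ↥(X'.1 ⊓ X₀)) :
    ∃ e : MulAction.stabilizer (V ≃ₗ[F] V) X₀, e • X = X' := by
  obtain ⟨e, he₀, he⟩ := exists_linearEquiv_stabilizing (X.2.trans X'.2.symm) hinf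
  exact ⟨⟨e, he₀⟩, Subtype.ext he⟩

end FiniteDimensional

theorem injectiveIncidence_comparable [Finite V] [Fintype (SubspaceOfDim F V x)]
    (h : (x ≤ z ∧ z + x ≤ finrank F V) ∨ (finrank F V ≤ z + x ∧ z ≤ x)) :
    InjectiveIncidence (Comparable : SubspaceOfDim F V x → SubspaceOfDim F V z → Prop) := by
  intro f hf
  funext X₀
  have : Finite (V ≃ₗ[F] V) := DFunLike.finite _
  let H := MulAction.stabilizer (V ≃ₗ[F] V) X₀.1
  exact eq_zero_of_triangular_of_fixed (H := H) (R := Comparable)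
    (fun e => comparable_smul_smul_iff e) (fun X => finrank F ↥(X.1 ⊓ X₀.1))
    (exists_mem_stabilizer_smul_eq X₀.1) (exists_comparable_forall_finrank_inf_le h X₀) hf
    fun e => Subtype.ext e.2

end SubspaceOfDim

end SubspaceOfDim

section DimFlag

open scoped Pointwise

variable {F V G : Type*} [Field F] [AddCommGroup V] [Module F V]

variable (F V) in
/-- An increasing sequence of subspaces of `V` with dimensions `d 0, d 1, …`. Flags are indexed by
`ℕ`, constant from some point on, so that all types of flag share one index set. -/
@[ext]
structure DimFlag (d : ℕ → ℕ) where
  space : ℕ → Submodule F V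
  mono : Monotone space
  finrank_space : ∀ i, finrank F (space i) = d i

/-- The flags `A` and `B` differ at most in the term `k + 1`, where they are comparable. -/
def FlagAdj (k : ℕ) {d e : ℕ → ℕ} (A : DimFlag F V d) (B : DimFlag F V e) : Prop :=
  (∀ j, j ≠ k + 1 → A.space j = B.space j) ∧
    (A.space (k + 1) ≤ B.space (k + 1) ∨ B.space (k + 1) ≤ A.space (k + 1))

/-- `d'` arises from `d` by moving one term, `d (k + 1)`, to a value at least as far from the mean
of its two neighbours; the inequality `|d (k + 1) - m| ≤ |d' (k + 1) - m|` for that mean `m` is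
spelled out without subtraction and division. -/
def SpreadStep (d d' : ℕ → ℕ) : Prop :=
  ∃ k, (∀ j, j ≠ k + 1 → d' j = d j) ∧
    ((d' (k + 1) ≤ d (k + 1) ∧ d (k + 1) + d' (k + 1) ≤ d k + d (k + 2)) ∨
      (d k + d (k + 2) ≤ d (k + 1) + d' (k + 1) ∧ d (k + 1) ≤ d' (k + 1)))

namespace DimFlag

variable {d e : ℕ → ℕ} {k : ℕ}

instance [Finite V] : Finite (DimFlag F V d) := by
  rcases isEmpty_or_nonempty (DimFlag F V d) with _ | ⟨⟨A₀⟩⟩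
  · infer_instance
  obtain ⟨N, hN⟩ := WellFoundedGT.monotone_chain_condition ⟨A₀.space, A₀.mono⟩
  have hspace : ∀ A : DimFlag F V d, ∀ j, N ≤ j → A.space N = A.space j := fun A j hj =>
    Submodule.eq_of_le_of_finrank_eq (A.mono hj) (by
      rw [A.finrank_space, A.finrank_space, ← A₀.finrank_space, ← A₀.finrank_space j]
      exact congrArg (fun X : Submodule F V => finrank F X) (hN j hj))
  refine Finite.of_injective (fun A (i : Fin (N + 1)) => A.space i) fun A B hAB => ?_
  ext1
  funext j
  have hle : ∀ i, i ≤ N → A.space i = B.space i := fun i hi =>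
    congrFun hAB ⟨i, Nat.lt_succ_of_le hi⟩
  rcases le_total j N with hj | hj
  · exact hle j hj
  · rw [← hspace A j hj, ← hspace B j hj, hle N le_rfl]

instance [Group G] [DistribMulAction G V] [SMulCommClass G F V] : MulAction G (DimFlag F V d) where
  smul g A :=
    { space i := g • A.space i
      mono _ _ hij := (smul_submodule_le_smul_iff g).2 (A.mono hij)
      finrank_space i := (finrank_smul_submodule g _).trans (A.finrank_space i) }
  one_smul A := DimFlag.ext (funext fun i => one_smul G (A.space i))
  mul_smul g h A := DimFlag.ext (funext fun i => mul_smul g h (A.space i))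

theorem flagAdj_smul_smul_iff [Group G] [DistribMulAction G V] [SMulCommClass G F V] (g : G)
    (A : DimFlag F V d) (B : DimFlag F V e) : FlagAdj k (g • A) (g • B) ↔ FlagAdj k A B :=
  and_congr (forall₂_congr fun _ _ => smul_left_cancel_iff g)
    (or_congr (smul_submodule_le_smul_iff g) (smul_submodule_le_smul_iff g))

/-- The flag `A` with its term `k + 1` replaced by `Z`. -/
def replace (A : DimFlag F V d) (hde : ∀ j, j ≠ k + 1 → d j = e j)
    (Z : Set.Icc (A.space k) (A.space (k + 2))) (hZ : finrank F Z = e (k + 1)) :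
    DimFlag F V e where
  space := Function.update A.space (k + 1) Z
  mono := by
    refine monotone_nat_of_le_succ fun i => ?_
    rcases eq_or_ne i k with rfl | hik
    · simpa using Z.2.1
    rcases eq_or_ne i (k + 1) with rfl | hik'
    · simpa using Z.2.2
    simpa [hik, hik'] using A.mono i.le_succ
  finrank_space i := by
    rcases eq_or_ne i (k + 1) with rfl | hi
    · rw [Function.update_self, hZ]
    · rw [Function.update_of_ne hi, A.finrank_space, hde i hi]

/-- The flags that differ from `A` at most in the term `k + 1`, which lies in the interval between
its neighbours, parametrized by the subspaces of a space `W` whose lattice is that interval. -/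
def chart {W : Type*} [AddCommGroup W] [Module F W] (A : DimFlag F V d)
    (Ψ : Submodule F W ≃o Set.Icc (A.space k) (A.space (k + 2)))
    (hΨ : ∀ X, finrank F (Ψ X : Submodule F V) = d k + finrank F X)
    (hde : ∀ j, j ≠ k + 1 → d j = e j) {x : ℕ} (hx : e (k + 1) = d k + x) :
    SubspaceOfDim F W x ↪ DimFlag F V e where
  toFun X := A.replace hde (Ψ X.1) (by rw [hΨ, X.2, hx])
  inj' X Y h := by
    have := congrFun (congrArg space h) (k + 1)
    simpa [replace, Subtype.coe_inj] using this

section Chart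

variable {W : Type*} [AddCommGroup W] [Module F W] {A : DimFlag F V d}
  {Ψ : Submodule F W ≃o Set.Icc (A.space k) (A.space (k + 2))}
  (hΨ : ∀ X, finrank F (Ψ X : Submodule F V) = d k + finrank F X)
  (hde : ∀ j, j ≠ k + 1 → d j = e j) {x : ℕ} (hx : e (k + 1) = d k + x)

theorem chart_space_self (X : SubspaceOfDim F W x) :
    (A.chart Ψ hΨ hde hx X).space (k + 1) = Ψ X.1 :=
  Function.update_self ..

theorem chart_space_of_ne (X : SubspaceOfDim F W x) {j : ℕ} (hj : j ≠ k + 1) :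
    (A.chart Ψ hΨ hde hx X).space j = A.space j :=
  Function.update_of_ne hj ..

theorem mem_range_chart {B : DimFlag F V e} (hB : ∀ j, j ≠ k + 1 → B.space j = A.space j) :
    B ∈ Set.range (A.chart Ψ hΨ hde hx) := by
  have hmem : B.space (k + 1) ∈ Set.Icc (A.space k) (A.space (k + 2)) := by
    rw [← hB k (by omega), ← hB (k + 2) (by omega)]
    exact ⟨B.mono (by omega), B.mono (by omega)⟩
  have hdim := hΨ (Ψ.symm ⟨_, hmem⟩)
  rw [Ψ.apply_symm_apply, B.finrank_space, hx] at hdim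
  refine ⟨⟨Ψ.symm ⟨_, hmem⟩, by omega⟩, ?_⟩
  ext1
  funext j
  rcases eq_or_ne j (k + 1) with rfl | hj
  · rw [chart_space_self, Ψ.apply_symm_apply]
  · rw [chart_space_of_ne _ _ _ _ hj, hB j hj]

end Chart

theorem exists_incidenceEmbedding [FiniteDimensional F V] (hde : ∀ j, j ≠ k + 1 → d j = e j)
    {x z : ℕ} (hx : d (k + 1) = d k + x) (hz : e (k + 1) = d k + z) (A : DimFlag F V d) :
    ∃ (C : Submodule F V) (E : IncidenceEmbedding
        (SubspaceOfDim.Comparable : SubspaceOfDim F C x → SubspaceOfDim F C z → Prop)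
        (FlagAdj k : DimFlag F V d → DimFlag F V e → Prop)),
      d (k + 2) = d k + finrank F C ∧ A ∈ Set.range E.left := by
  obtain ⟨C, Ψ, hC, hΨ⟩ := exists_orderIso_Icc (A.mono (by omega : k ≤ k + 2))
  simp only [A.finrank_space] at hC hΨ
  have hoff {e : ℕ → ℕ} {he : ∀ j, j ≠ k + 1 → d j = e j} {y : ℕ} {hy : e (k + 1) = d k + y}
      (X : SubspaceOfDim F C y) : ∀ j, j ≠ k + 1 → (A.chart Ψ hΨ he hy X).space j = A.space j :=
    fun j hj => chart_space_of_ne hΨ he hy X hj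
  refine ⟨C,
    { left := A.chart Ψ hΨ (fun _ _ => rfl) hx
      right := A.chart Ψ hΨ hde hz
      rel_iff := fun X Z => ?_
      mem_range_right := fun X B hXB =>
        mem_range_chart hΨ hde hz fun j hj => (hXB.1 j hj).symm.trans (hoff X j hj)
      mem_range_left := fun B Z hBZ =>
        mem_range_chart hΨ _ hx fun j hj => (hBZ.1 j hj).trans (hoff Z j hj) },
    hC, mem_range_chart hΨ _ hx fun _ _ => rfl⟩
  simp only [FlagAdj, chart_space_self, Subtype.coe_le_coe, Ψ.le_iff_le]
  exact and_iff_right fun j hj => (hoff X j hj).trans (hoff Z j hj).symm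

theorem monotone_dim [FiniteDimensional F V] (A : DimFlag F V d) : Monotone d := fun i j hij => by
  simpa only [A.finrank_space] using Submodule.finrank_mono (A.mono hij)

end DimFlag

theorem IsTransitiveOn.of_spreadStep [Finite V] [Group G] [Finite G] [DistribMulAction G V]
    [SMulCommClass G F V] {Y : Set G} {d d' : ℕ → ℕ} (h : SpreadStep d d')
    (hY : IsTransitiveOn Y (DimFlag F V d)) : IsTransitiveOn Y (DimFlag F V d') := by
  classical
  obtain ⟨k, hd, hk⟩ := h
  rcases isEmpty_or_nonempty (DimFlag F V d') with _ | ⟨⟨A₀⟩⟩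
  · exact ⟨0, isEmptyElim⟩
  have := Fintype.ofFinite (DimFlag F V d')
  have hle₁ := A₀.monotone_dim k.le_succ
  have hle₂ := A₀.monotone_dim (k + 1).le_succ
  simp only [Nat.succ_eq_add_one, add_assoc, Nat.reduceAdd] at hle₁ hle₂
  rw [← hd k (by omega), ← hd (k + 2) (by omega)] at hk
  obtain ⟨x, hx⟩ : ∃ x, d' (k + 1) = d' k + x := Nat.exists_eq_add_of_le hle₁
  obtain ⟨z, hz⟩ : ∃ z, d (k + 1) = d' k + z := Nat.exists_eq_add_of_le (by omega)
  have hembed := DimFlag.exists_incidenceEmbedding (F := F) (V := V) hd hx hz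
  refine hY.of_injectiveIncidence (R := FlagAdj k) DimFlag.flagAdj_smul_smul_iff
    (fun f hf => funext fun A => ?_) fun A A' => ?_
  · obtain ⟨C, E, hC, X, rfl⟩ := hembed A
    have := Fintype.ofFinite (SubspaceOfDim F C x)
    exact E.apply_left_eq_zero (SubspaceOfDim.injectiveIncidence_comparable (by omega)) hf X
  · obtain ⟨C, E, hC, X, rfl⟩ := hembed A
    obtain ⟨C', E', hC', X', rfl⟩ := hembed A'
    rw [E.ncard_rel_left, E'.ncard_rel_left]
    exact SubspaceOfDim.ncard_comparable_eq (by omega) X X'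

theorem IsTransitiveOn.of_reflTransGen_spreadStep [Finite V] [Group G] [Finite G]
    [DistribMulAction G V] [SMulCommClass G F V] {Y : Set G} {d d' : ℕ → ℕ}
    (h : Relation.ReflTransGen SpreadStep d d') (hY : IsTransitiveOn Y (DimFlag F V d)) :
    IsTransitiveOn Y (DimFlag F V d') := by
  induction h with
  | refl => exact hY
  | tail _ hstep ih => exact ih.of_spreadStep hstep

end DimFlag

section Dominance

/-- The sum of the first `k` entries of `l`, as a sequence in `k`; it is constant beyond the length
of `l`. For the parts of a composition these are the dimensions of the terms of a flag. -/
def partialSum (l : List ℕ) (k : ℕ) : ℕ :=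
  (l.take k).sum

/-- Discrete concavity of a sequence, stated without subtraction. -/
def ConcaveSeq (d : ℕ → ℕ) : Prop :=
  ∀ k, d k + d (k + 2) ≤ 2 * d (k + 1)

/-- The sequence `d` raised by one on the interval `[i, j)`. -/
def raiseOn (d : ℕ → ℕ) (i j k : ℕ) : ℕ :=
  if i ≤ k ∧ k < j then d k + 1 else d k

open Relation

theorem spreadStep_partialSum_swap (l₁ l₂ : List ℕ) (a b : ℕ) :
    SpreadStep (partialSum (l₁ ++ a :: b :: l₂)) (partialSum (l₁ ++ b :: a :: l₂)) := by
  refine ⟨l₁.length, fun j hj => ?_, ?_⟩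
  · rcases le_or_gt j l₁.length with hle | hlt
    · simp [partialSum, List.take_append, Nat.sub_eq_zero_of_le hle]
    · obtain ⟨i, rfl⟩ : ∃ i, j = l₁.length + (i + 2) := ⟨j - l₁.length - 2, by omega⟩
      simp only [partialSum, List.take_length_add_append, List.take_succ_cons, List.sum_append,
        List.sum_cons]
      omega
  · simp only [partialSum, List.take_length_add_append, List.take_succ_cons, List.sum_append,
      List.sum_cons, List.take_zero, List.sum_nil, List.take_left']
    omega

theorem reflTransGen_spreadStep_of_perm {l l' : List ℕ} (h : l.Perm l') :
    ReflTransGen SpreadStep (partialSum l) (partialSum l') := by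
  suffices H : ∀ p : List ℕ, ReflTransGen SpreadStep (partialSum (p ++ l)) (partialSum (p ++ l'))
    from H []
  induction h with
  | nil => exact fun _ => .refl
  | cons a _ ih => exact fun p => by simpa using ih (p ++ [a])
  | swap a b l => exact fun p => .single (spreadStep_partialSum_swap p l b a)
  | trans _ _ ih₁ ih₂ => exact fun p => (ih₁ p).trans (ih₂ p)

theorem ConcaveSeq.reflTransGen_raiseOn {d : ℕ → ℕ} (hd : ConcaveSeq d) {i : ℕ} (hi : 0 < i)
    (j : ℕ) : ReflTransGen SpreadStep d (raiseOn d i j) := by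
  have hself : ∀ j, j ≤ i → raiseOn d i j = d := fun j hj => funext fun k => if_neg (by omega)
  induction j with
  | zero => rw [hself 0 i.zero_le]
  | succ j ih =>
    rcases lt_or_ge j i with hj | hj
    · rw [hself (j + 1) hj]
    · obtain ⟨k, rfl⟩ : ∃ k, j = k + 1 := ⟨j - 1, by omega⟩
      have := hd k
      refine ih.tail ⟨k, fun l hl => ?_, Or.inr ?_⟩
      · unfold raiseOn
        split_ifs <;> omega
      · unfold raiseOn
        split_ifs <;> omega

theorem concaveSeq_raiseOn {d e : ℕ → ℕ} (hd : ConcaveSeq d) (he : ConcaveSeq e)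
    (hle : ∀ k, d k ≤ e k) {i j : ℕ} (hi : ∀ k < i, d k = e k)
    (hij : ∀ k, i ≤ k → k < j → d k < e k) (hj : d j = e j) : ConcaveSeq (raiseOn d i j) := by
  intro k
  have hdk := hd k
  have hek := he k
  have hle₀ := hle k
  have hle₂ := hle (k + 2)
  have hlt₀ := hij k
  have hlt₂ := hij (k + 2)
  have hi₁ := hi (k + 1)
  have hj₁ : k + 1 = j → d (k + 1) = e (k + 1) := fun h => h ▸ hj
  unfold raiseOn
  split_ifs <;> omega

theorem exists_maximal_interval_lt {d e : ℕ → ℕ} {N : ℕ} (hle : ∀ k, d k ≤ e k)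
    (hN : ∀ k, N ≤ k → d k = e k) (hne : d ≠ e) :
    ∃ i j, i < j ∧ (∀ k < i, d k = e k) ∧ (∀ k, i ≤ k → k < j → d k < e k) ∧ d j = e j := by
  classical
  have hexists : ∃ i, d i ≠ e i := Function.ne_iff.1 hne
  have hi := Nat.find_spec hexists
  have hexists' : ∃ j, Nat.find hexists < j ∧ d j = e j :=
    ⟨max N (Nat.find hexists + 1), by omega, hN _ (le_max_left _ _)⟩
  obtain ⟨hij, hj⟩ := Nat.find_spec hexists'
  refine ⟨_, _, hij, fun k hk => not_not.1 (Nat.find_min hexists hk), fun k hik hkj => ?_, hj⟩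
  refine (hle k).lt_of_ne fun hk => ?_
  rcases hik.eq_or_lt with rfl | hik
  · exact hi hk
  · exact Nat.find_min hexists' hkj ⟨hik, hk⟩

theorem ConcaveSeq.reflTransGen_of_le {d e : ℕ → ℕ} {N : ℕ} (hd : ConcaveSeq d)
    (he : ConcaveSeq e) (hle : ∀ k, d k ≤ e k) (hzero : d 0 = e 0)
    (hN : ∀ k, N ≤ k → d k = e k) : ReflTransGen SpreadStep d e := by
  induction hs : ∑ k ∈ Finset.range N, (e k - d k) using Nat.strong_induction_on generalizing d with
  | _ s ih =>
  by_cases hne : d = e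
  · rw [hne]
  obtain ⟨i, j, hij, hi, hlt, hj⟩ := exists_maximal_interval_lt hle hN hne
  have hi_lt := hlt i le_rfl hij
  have hi_pos : 0 < i := Nat.pos_of_ne_zero fun h => by subst h; omega
  have hiN : i < N := not_le.1 fun h => hi_lt.ne (hN i h)
  have hd_le : ∀ k, d k ≤ raiseOn d i j k := fun k => by unfold raiseOn; split_ifs <;> omega
  have hraise_le : ∀ k, raiseOn d i j k ≤ e k := fun k => by
    have := hlt k
    have := hle k
    unfold raiseOn
    split_ifs <;> omega
  have hraise_zero : raiseOn d i j 0 = e 0 := by rw [raiseOn, if_neg (by omega), hzero]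
  have hraise_N : ∀ k, N ≤ k → raiseOn d i j k = e k := fun k hk =>
    (hraise_le k).antisymm ((hN k hk).ge.trans (hd_le k))
  have hsum : ∑ k ∈ Finset.range N, (e k - raiseOn d i j k) < s := by
    rw [← hs]
    refine Finset.sum_lt_sum (fun k _ => Nat.sub_le_sub_left (hd_le k) _)
      ⟨i, Finset.mem_range.2 hiN, ?_⟩
    rw [raiseOn, if_pos ⟨le_rfl, hij⟩]
    omega
  exact (hd.reflTransGen_raiseOn hi_pos j).trans
    (ih _ hsum (concaveSeq_raiseOn hd he hle hi hlt hj) hraise_le hraise_zero hraise_N rfl)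

theorem concaveSeq_partialSum {l : List ℕ} (hl : l.Pairwise (· ≥ ·)) :
    ConcaveSeq (partialSum l) := by
  unfold ConcaveSeq partialSum
  intro k
  induction k generalizing l with
  | zero =>
    match l, hl with
    | [], _ => simp
    | [a], _ =>
      simp only [List.take_zero, List.take_succ_cons, List.take_nil, List.sum_cons, List.sum_nil]
      omega
    | a :: b :: l, hl =>
      have : b ≤ a := List.rel_of_pairwise_cons hl List.mem_cons_self
      simp only [List.take_zero, List.take_succ_cons, List.sum_cons, List.sum_nil]
      omega
  | succ k ih =>
    match l, hl with
    | [], _ => simp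
    | a :: l, hl =>
      have := ih hl.of_cons
      simp only [List.take_succ_cons, List.sum_cons]
      omega

theorem sum_le_partialSum_of_sublist {l s : List ℕ} (hl : l.Pairwise (· ≥ ·)) (hs : s.Sublist l)
    {k : ℕ} (hk : s.length ≤ k) : s.sum ≤ partialSum l k := by
  unfold partialSum
  induction l generalizing s k with
  | nil => simp [List.sublist_nil.1 hs]
  | cons a l ih =>
    match s, k, hk with
    | [], _, _ => simp
    | b :: s, k + 1, hk =>
      have hba : b ≤ a := by
        rcases List.mem_cons.1 (hs.subset List.mem_cons_self) with rfl | hb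
        · exact le_rfl
        · exact List.rel_of_pairwise_cons hl hb
      have hs' : s.Sublist l := hs.tail
      have hsl := ih hl.of_cons hs' (Nat.le_of_succ_le_succ hk)
      simpa only [List.take_succ_cons, List.sum_cons] using Nat.add_le_add hba hsl

theorem kLargestSum_coe {l : List ℕ} (hl : l.Pairwise (· ≥ ·)) (k : ℕ) :
    kLargestSum l k = partialSum l k := by
  apply le_antisymm
  · refine Multiset.sup_le.2 fun b hb => ?_
    obtain ⟨s, hs, rfl⟩ := Multiset.mem_map.1 hb
    obtain ⟨hs, hk⟩ := Multiset.mem_filter.1 hs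
    induction s using Quotient.inductionOn with
    | _ s =>
    obtain ⟨s', hp, hs'⟩ := Multiset.coe_le.1 (Multiset.mem_powerset.1 hs)
    have hk' : s'.length ≤ k := hp.length_eq.trans_le hk
    exact hp.sum_eq.ge.trans (sum_le_partialSum_of_sublist hl hs' hk')
  · have hsub : (↑(l.take k) : Multiset ℕ) ≤ l :=
      Multiset.coe_le.2 (List.take_sublist k l).subperm
    have hcard : (↑(l.take k) : Multiset ℕ).card ≤ k := by simp
    exact Multiset.le_sup (Multiset.mem_map.2
      ⟨_, Multiset.mem_filter.2 ⟨Multiset.mem_powerset.2 hsub, hcard⟩, Multiset.sum_coe _⟩)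

theorem Dominates.reflTransGen_spreadStep {l m : List ℕ} (hdom : Dominates l m)
    (hsum : l.sum = m.sum) : ReflTransGen SpreadStep (partialSum l) (partialSum m) := by
  have hl := List.perm_insertionSort (· ≥ ·) l
  have hm := List.perm_insertionSort (· ≥ ·) m
  have hl_sorted := List.pairwise_insertionSort (· ≥ ·) l
  have hm_sorted := List.pairwise_insertionSort (· ≥ ·) m
  generalize l.insertionSort (· ≥ ·) = l' at hl hl_sorted
  generalize m.insertionSort (· ≥ ·) = m' at hm hm_sorted
  rw [← Multiset.coe_eq_coe.2 hl, ← Multiset.coe_eq_coe.2 hm] at hdom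
  have hle : ∀ k, partialSum l' k ≤ partialSum m' k := fun k => by
    rw [← kLargestSum_coe hl_sorted, ← kLargestSum_coe hm_sorted]
    exact hdom k
  have hend : ∀ k, l'.length + m'.length ≤ k → partialSum l' k = partialSum m' k := fun k hk => by
    rw [partialSum, partialSum, List.take_of_length_le (by omega),
      List.take_of_length_le (by omega), hl.sum_eq, hm.sum_eq, hsum]
  exact (reflTransGen_spreadStep_of_perm hl.symm).trans <|
    ((concaveSeq_partialSum hl_sorted).reflTransGen_of_le (concaveSeq_partialSum hm_sorted) hle rfl
      hend).trans (reflTransGen_spreadStep_of_perm hm)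

end Dominance

section RhoFlag

open scoped Pointwise

variable {F : Type} [Field F] {n : ℕ} {ρ : Composition n}

theorem RhoFlag.ext {A B : RhoFlag F n ρ} (h : A.V = B.V) : A = B := by
  cases A
  cases B
  congr

theorem RhoFlag.finrank_eq (A : RhoFlag F n ρ) (i : ℕ) (hi : i < ρ.length + 1) :
    finrank F (A.V ⟨i, hi⟩) = partialSum ρ.blocks i := by
  change _ = ρ.sizeUpTo i
  induction i with
  | zero =>
    change finrank F (A.V 0) = _
    rw [A.bot_eq, finrank_bot, Composition.sizeUpTo_zero]
  | succ i ih =>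
    rw [ρ.sizeUpTo_succ' ⟨i, by omega⟩, ← ih (by omega)]
    exact A.dim ⟨i, by omega⟩

theorem partialSum_blocks_of_length_le {i : ℕ} (hi : ρ.length ≤ i) :
    partialSum ρ.blocks i = n :=
  ρ.sizeUpTo_ofLength_le i hi

variable (F ρ) in
/-- A `ρ`-flag as a flag indexed by `ℕ`, by repeating its last term. -/
def rhoFlagEquivDimFlag : RhoFlag F n ρ ≃ DimFlag F (Fin n → F) (partialSum ρ.blocks) where
  toFun A :=
    { space i := A.V ⟨min i ρ.length, by omega⟩
      mono i j hij := A.mono (Fin.mk_le_mk.2 (min_le_min_right _ hij))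
      finrank_space i := by
        rw [A.finrank_eq]
        rcases le_total i ρ.length with hi | hi
        · rw [min_eq_left hi]
        · rw [min_eq_right hi, partialSum_blocks_of_length_le hi,
            partialSum_blocks_of_length_le le_rfl] }
  invFun A :=
    { V i := A.space i
      mono _ _ hij := A.mono hij
      bot_eq := Submodule.finrank_eq_zero.1 (A.finrank_space 0)
      top_eq := Submodule.eq_top_of_finrank_eq <| by
        rw [A.finrank_space, finrank_fin_fun]
        exact partialSum_blocks_of_length_le le_rfl
      dim i := by
        rw [A.finrank_space, A.finrank_space]
        exact ρ.sizeUpTo_succ' i }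
  left_inv A := by
    refine RhoFlag.ext (funext fun i => ?_)
    exact congrArg A.V (Fin.ext (min_eq_left (Nat.le_of_lt_succ i.2)))
  right_inv A := by
    ext1
    funext i
    rcases le_total i ρ.length with hi | hi
    · exact congrArg A.space (min_eq_left hi)
    · refine Submodule.eq_of_le_of_finrank_eq (A.mono (min_le_left ..)) ?_
      rw [A.finrank_space, A.finrank_space]
      exact (partialSum_blocks_of_length_le (le_min hi le_rfl)).trans
        (partialSum_blocks_of_length_le hi).symm

theorem mapsFlag_iff_smul_eq (g : GL (Fin n) F) (A B : RhoFlag F n ρ) :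
    MapsFlag F g A B ↔ g • rhoFlagEquivDimFlag F ρ A = rhoFlagEquivDimFlag F ρ B := by
  refine ⟨fun h => DimFlag.ext (funext fun i => h _), fun h j => ?_⟩
  have hj : (⟨min j ρ.length, by omega⟩ : Fin (ρ.length + 1)) = j :=
    Fin.ext (min_eq_left (Nat.le_of_lt_succ j.2))
  rw [← hj]
  exact congrFun (congrArg DimFlag.space h) j

theorem transitiveOnFlags_iff [Fintype F] (Y : Set (GL (Fin n) F)) :
    TransitiveOnFlags F Y ρ ↔ IsTransitiveOn Y (DimFlag F (Fin n → F) (partialSum ρ.blocks)) := by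
  simp only [TransitiveOnFlags, IsTransitiveOn, mapsFlag_iff_smul_eq,
    ← (rhoFlagEquivDimFlag F ρ).forall_congr_right]
  rfl

end RhoFlag

/-- If `Y ⊆ GL(n,q)` is transitive on `σ`-flags and `σ̃ ⊴ τ̃`, where `σ̃`, `τ̃` are the
partitions obtained from the compositions `σ`, `τ` by rearranging the parts into nonincreasing
order, then `Y` is transitive on `τ`-flags. -/
theorem statement0 (q : ℕ) (hq : IsPrimePow q) (F : Type) [Field F] [Fintype F]
    (hF : Fintype.card F = q) (n : ℕ) (hn : 0 < n) (σ τ : Composition n)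
    (Y : Set (GL (Fin n) F)) (hY : TransitiveOnFlags F Y σ)
    (hdom : Dominates (↑σ.blocks) (↑τ.blocks)) :
    TransitiveOnFlags F Y τ := by
  have hsum : σ.blocks.sum = τ.blocks.sum := σ.blocks_sum.trans τ.blocks_sum.symm
  rw [transitiveOnFlags_iff] at hY ⊢
  exact hY.of_reflTransGen_spreadStep (hdom.reflTransGen_spreadStep hsum)
end

section
/- Let q be a prime power and n a positive integer, and let α, β ∈ Σ_{n,q} have the same type. Then a subset Y of GL(n,q) is transitive on α-flags if and only if Y is transitive on β-flags. -/
open Module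

/-- An element `α = (ρ, I)` of `Σ_{n,q}`: a composition `ρ` of `n` together with a set `I` of
indices of parts of `ρ`, where for `q = 2` every part not indexed by `I` must exceed `1`. -/
structure SigmaNQ (q n : ℕ) where
  ρ : Composition n
  I : Finset (Fin ρ.length)
  two : q = 2 → ∀ i ∉ I, 1 < ρ.blocksFun i

/-- The first component `σ` of the type of `α = (ρ,I)`: the multiset of parts `ρ_i` with
`i ∈ I` (a partition, recorded as an unordered multiset of parts). -/
def SigmaNQ.typeSigma {q n : ℕ} (α : SigmaNQ q n) : Multiset ℕ :=
  α.I.val.map α.ρ.blocksFun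

/-- The second component `τ` of the type of `α = (ρ,I)`: the multiset of parts `ρ_i` with
`i ∉ I` (a partition, recorded as an unordered multiset of parts). -/
def SigmaNQ.typeTau {q n : ℕ} (α : SigmaNQ q n) : Multiset ℕ :=
  α.Iᶜ.val.map α.ρ.blocksFun

/-- An `α`-flag for `α = (ρ,I) ∈ Σ_{n,q}`: a `ρ`-flag `{0} = V_0 ≤ V_1 ≤ ⋯ ≤ V_k = F_q^n`
with `dim(V_i/V_{i−1}) = ρ_i`, together with, for each `i ∈ I`, an ordered basis of the
quotient `V_i/V_{i−1}`, recorded by a tuple of `ρ_i` representatives in `V_i` whose classes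
modulo `V_{i−1}` are linearly independent (hence a basis of `V_i/V_{i−1}`). -/
structure AlphaFlag (F : Type) [Field F] {q n : ℕ} (α : SigmaNQ q n) where
  V : Fin (α.ρ.length + 1) → Submodule F (Fin n → F)
  mono : Monotone V
  bot_eq : V 0 = ⊥
  top_eq : V (Fin.last α.ρ.length) = ⊤
  dim : ∀ i : Fin α.ρ.length,
    finrank F (V i.succ) = finrank F (V i.castSucc) + α.ρ.blocksFun i
  B : ∀ i : Fin α.ρ.length, i ∈ α.I → Fin (α.ρ.blocksFun i) → (Fin n → F)
  B_mem : ∀ i hi m, B i hi m ∈ V i.succ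
  B_indep : ∀ i hi,
    LinearIndependent F (fun m => (V i.castSucc).mkQ (B i hi m))

/-- `g ∈ GL(n,q)` maps the `α`-flag `A` to the `α`-flag `C`: it maps the subspaces of `A`
to those of `C`, and the basis representatives of `A` to representatives of the same classes
as those of `C` (i.e. `g` maps the induced bases of the quotients to each other). -/
def MapsAlphaFlag (F : Type) [Field F] {q n : ℕ} {α : SigmaNQ q n} (g : GL (Fin n) F)
    (A C : AlphaFlag F α) : Prop :=
  (∀ j, Submodule.map (glMap F g) (A.V j) = C.V j) ∧
  (∀ i hi m, glMap F g (A.B i hi m) - C.B i hi m ∈ C.V i.castSucc)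

/-- A subset `Y` of `GL(n,q)` is transitive on `α`-flags: there is a constant `r` such that
for all `α`-flags `A`, `C` there are exactly `r` elements `g ∈ Y` mapping `A` to `C`. -/
def TransitiveOnAlphaFlags (F : Type) [Field F] [Fintype F] {q n : ℕ} (Y : Set (GL (Fin n) F))
    (α : SigmaNQ q n) : Prop :=
  ∃ r : ℕ, ∀ A C : AlphaFlag F α,
    Nat.card {g : GL (Fin n) F // g ∈ Y ∧ MapsAlphaFlag F g A C} = r

/-!
The number of elements of `Y` mapping one point of a finite `G`-set to another is constant if and
only if its variance vanishes, and its first two moments depend on `Y` and on the numbers of fixed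
points only. It therefore suffices that each `g` fixes as many `α`-flags as `β`-flags.

An `α`-flag fixed by `g` is a chain of `g`-invariant subspaces, where `g` acts trivially on the
`i`-th quotient if `i ∈ I`, together with bases of these quotients; the number of bases depends
only on `σ`. To reorder the parts of `α` it suffices to interchange two adjacent steps of the chain.
Every endomorphism of a finite-dimensional space is self-adjoint for some nondegenerate symmetric
form. Given invariant subspaces `W ≤ L`, apply this to the map induced by `g` on `L / W`: taking
orthogonal complements is a bijection between the invariant `U` for which the steps `W ≤ U ≤ L`
have types `s` and `t` and those for which they have types `t` and `s`.
-/

section SelfAdjointForm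

open Polynomial

variable {F V : Type*} [Field F] [AddCommGroup V] [Module F V]

theorem exists_linearMap_quotient_span_separating {p : F[X]} (hp : p ≠ 0) :
    ∃ l : (F[X] ⧸ Ideal.span {p}) →ₗ[F] F, ∀ x, (∀ y, l (x * y) = 0) → x = 0 := by
  -- A remainder `r ≠ 0` can be multiplied by a power of `X` so that its degree is `deg p - 1`;
  -- taking the coefficient of that degree then gives the leading coefficient of `r`.
  let coeffMod : F[X] →ₗ[F] F :=
    { toFun := fun f => (f % p).coeff (p.natDegree - 1)
      map_add' := fun f g => by rw [add_mod, coeff_add]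
      map_smul' := fun a f => by
        rw [mod_def, mod_def, smul_modByMonic, coeff_smul, RingHom.id_apply] }
  have coeffMod_apply (f : F[X]) : coeffMod f = (f % p).coeff (p.natDegree - 1) := rfl
  have le_ker : (Ideal.span {p}).restrictScalars F ≤ LinearMap.ker coeffMod := fun f hf => by
    rw [LinearMap.mem_ker, coeffMod_apply,
      EuclideanDomain.mod_eq_zero.2 (Ideal.mem_span_singleton.1 hf), coeff_zero]
  refine ⟨((Ideal.span {p}).restrictScalars F).liftQ coeffMod le_ker, fun x hx => ?_⟩
  obtain ⟨r, hr, rfl⟩ : ∃ r : F[X], r.degree < p.degree ∧ Ideal.Quotient.mk _ r = x := by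
    obtain ⟨f, rfl⟩ := Ideal.Quotient.mk_surjective x
    refine ⟨f % p, degree_mod_lt f hp, Ideal.Quotient.eq.2 (Ideal.mem_span_singleton.2 ?_)⟩
    exact ⟨-(f / p), by rw [EuclideanDomain.mod_eq_sub_mul_div]; ring⟩
  suffices r = 0 by rw [this, map_zero]
  by_contra hr0
  have hlt : r.natDegree < p.natDegree := natDegree_lt_natDegree hr0 hr
  set k := p.natDegree - 1 - r.natDegree
  have hdeg : (r * X ^ k).degree < p.degree := by
    rw [degree_mul, degree_X_pow, degree_eq_natDegree hr0, degree_eq_natDegree hp]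
    norm_cast
    lia
  have hcoeff : coeffMod (r * X ^ k) = 0 := hx (Ideal.Quotient.mk _ (X ^ k))
  rw [coeffMod_apply, (mod_eq_self_iff hp).2 hdeg,
    show p.natDegree - 1 = r.natDegree + k by lia, coeff_mul_X_pow] at hcoeff
  exact hr0 (leadingCoeff_eq_zero.1 hcoeff)

theorem exists_bilinForm_isSelfAdjoint_of_linearEquiv_pi {ι : Type*} [Finite ι] {A : ι → Type*}
    [∀ i, CommRing (A i)] [∀ i, Algebra F (A i)] {l : ∀ i, A i →ₗ[F] F}
    (hl : ∀ i x, (∀ y, l i (x * y) = 0) → x = 0) (e : V ≃ₗ[F] ∀ i, A i) {f : End F V}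
    {a : ∀ i, A i} (hf : ∀ v, e (f v) = a * e v) :
    ∃ B : LinearMap.BilinForm F V, B.IsSymm ∧ B.Nondegenerate ∧ B.IsSelfAdjoint f := by
  classical
  have := Fintype.ofFinite ι
  let B : LinearMap.BilinForm F V := ∑ i, ((LinearMap.mul F (A i)).compr₂ (l i)).compl₁₂
    (LinearMap.proj i ∘ₗ e.toLinearMap) (LinearMap.proj i ∘ₗ e.toLinearMap)
  have B_apply (v w : V) : B v w = ∑ i, l i (e v i * e w i) := by
    simp [B, LinearMap.sum_apply]
  have hsymm : B.IsSymm := ⟨fun v w => by simp only [B_apply, mul_comm]⟩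
  refine ⟨B, hsymm, hsymm.isRefl.nondegenerate_iff_separatingLeft.2 fun v hv => ?_, fun v w => ?_⟩
  · rw [← e.map_eq_zero_iff]
    funext i
    refine hl i _ fun y => ?_
    have h := hv (e.symm (Pi.single i y))
    rw [B_apply, Finset.sum_eq_single i (fun j _ hj => by simp [hj]) (by simp)] at h
    simpa using h
  · simp only [B_apply, hf, Pi.mul_apply, mul_left_comm, mul_assoc]

theorem exists_bilinForm_isSelfAdjoint [FiniteDimensional F V] (f : End F V) :
    ∃ B : LinearMap.BilinForm F V, B.IsSymm ∧ B.Nondegenerate ∧ B.IsSelfAdjoint f := by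
  obtain ⟨ι, _, p, hp, k, ⟨e⟩⟩ := Module.equiv_directSum_of_isTorsion
    (AEval.isTorsion_of_finiteDimensional F V f)
  choose l hl using fun i =>
    exists_linearMap_quotient_span_separating (pow_ne_zero (k i) (hp i).ne_zero)
  let e' := e.trans (DirectSum.linearEquivFunOnFintype F[X] ι _)
  refine exists_bilinForm_isSelfAdjoint_of_linearEquiv_pi hl
    ((AEval'.of f).trans (e'.restrictScalars F)) (a := fun i => Ideal.Quotient.mk _ X) fun v => ?_
  change e' (AEval'.of f (f v)) = _ * e' (AEval'.of f v)
  rw [← AEval'.X_smul_of, map_smul]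
  rfl

end SelfAdjointForm

section FlagStep

variable {F V : Type*} [Field F] [AddCommGroup V] [Module F V]

theorem exists_bilinForm_isSelfAdjoint_ker_eq [FiniteDimensional F V] {f : End F V}
    {N : Submodule F V} (hN : N ∈ f.invtSubmodule) :
    ∃ B : LinearMap.BilinForm F V, B.IsSymm ∧ LinearMap.ker B = N ∧ B.IsSelfAdjoint f := by
  obtain ⟨B, hsymm, hB, hf⟩ := exists_bilinForm_isSelfAdjoint (N.mapQ N f hN)
  refine ⟨B.compl₁₂ N.mkQ N.mkQ, ⟨fun x y => hsymm.eq _ _⟩, ?_, fun x y => hf (N.mkQ x) (N.mkQ y)⟩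
  ext x
  rw [LinearMap.mem_ker, ← Submodule.Quotient.mk_eq_zero N]
  refine ⟨fun h => hB.1 _ fun z => ?_, fun h => ?_⟩
  · obtain ⟨y, rfl⟩ := N.mkQ_surjective z
    exact LinearMap.congr_fun h y
  · ext y
    simp [h]

theorem orthogonal_le_comap_orthogonal {B : LinearMap.BilinForm F V} {h : End F V}
    (hB : B.IsSelfAdjoint h) {U₁ U₂ : Submodule F V} (hU : U₁ ≤ U₂.comap h) :
    B.orthogonal U₂ ≤ (B.orthogonal U₁).comap h := fun x hx y hy =>
  (hB y x).symm.trans (hx (h y) (hU hy))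

theorem finrank_add_finrank_orthogonal_of_ker_le [FiniteDimensional F V]
    {B : LinearMap.BilinForm F V} {U : Submodule F V} (hU : LinearMap.ker B ≤ U) :
    finrank F U + finrank F (B.orthogonal U) = finrank F V + finrank F (LinearMap.ker B) := by
  rw [LinearMap.BilinForm.finrank_add_finrank_orthogonal', inf_eq_right.2 hU]

theorem ker_le_orthogonal {B : LinearMap.BilinForm F V} (hB : B.IsRefl) (U : Submodule F V) :
    LinearMap.ker B ≤ B.orthogonal U := by
  rw [← LinearMap.BilinForm.orthogonal_top_eq_ker hB]
  exact LinearMap.BilinForm.orthogonal_le le_top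

theorem orthogonal_orthogonal_of_ker_le [FiniteDimensional F V] {B : LinearMap.BilinForm F V}
    (hB : B.IsRefl) {U : Submodule F V} (hU : LinearMap.ker B ≤ U) :
    B.orthogonal (B.orthogonal U) = U := by
  refine (Submodule.eq_of_le_of_finrank_eq
    (LinearMap.BilinForm.le_orthogonal_orthogonal hB) ?_).symm
  have h₁ := finrank_add_finrank_orthogonal_of_ker_le hU
  have h₂ := finrank_add_finrank_orthogonal_of_ker_le (ker_le_orthogonal hB U)
  lia

/-- A step of type `t = (a, b)` in a chain of `f`-invariant subspaces: `U / W` has dimension `a`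
and, if the step is marked, that is if `b = true`, then `f` acts trivially on `U / W`. -/
structure IsFlagStep (f : End F V) (t : ℕ × Bool) (W U : Submodule F V) : Prop where
  le : W ≤ U
  left_mem : W ∈ f.invtSubmodule
  right_mem : U ∈ f.invtSubmodule
  finrank_eq : finrank F U = finrank F W + t.1
  le_comap_sub_one : t.2 = true → U ≤ W.comap (f - 1)

theorem IsFlagStep.orthogonal [FiniteDimensional F V] {f : End F V} {t : ℕ × Bool}
    {W U : Submodule F V} (h : IsFlagStep f t W U) {B : LinearMap.BilinForm F V}
    (hf : B.IsSelfAdjoint f) (hW : LinearMap.ker B ≤ W) :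
    IsFlagStep f t (B.orthogonal U) (B.orthogonal W) where
  le := LinearMap.BilinForm.orthogonal_le h.le
  left_mem := orthogonal_le_comap_orthogonal hf h.right_mem
  right_mem := orthogonal_le_comap_orthogonal hf h.left_mem
  finrank_eq := by
    have hW' := finrank_add_finrank_orthogonal_of_ker_le hW
    have hU' := finrank_add_finrank_orthogonal_of_ker_le (hW.trans h.le)
    have := h.finrank_eq
    lia
  le_comap_sub_one ht := by
    have hf' : B.IsSelfAdjoint ⇑(f - 1) := hf.sub LinearMap.isAdjointPair_one
    exact orthogonal_le_comap_orthogonal hf' (h.le_comap_sub_one ht)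

theorem isFlagStep_restrict_iff {f : End F V} {L : Submodule F V} (hL : ∀ x ∈ L, f x ∈ L)
    {t : ℕ × Bool} {W U : Submodule F L} :
    IsFlagStep (f.restrict hL) t W U ↔ IsFlagStep f t (W.map L.subtype) (U.map L.subtype) := by
  have map_le_comap_iff {g : End F V} {g' : End F L} (hg : L.subtype ∘ₗ g' = g ∘ₗ L.subtype)
      {N N' : Submodule F L} :
      N.map L.subtype ≤ (N'.map L.subtype).comap g ↔ N ≤ N'.comap g' := by
    rw [Submodule.map_le_iff_le_comap, ← Submodule.comap_comp, ← hg, Submodule.comap_comp,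
      Submodule.comap_map_eq_of_injective L.subtype_injective]
  have map_mem_iff {N : Submodule F L} :
      N.map L.subtype ∈ f.invtSubmodule ↔ N ∈ End.invtSubmodule (f.restrict hL) :=
    map_le_comap_iff rfl
  have map_le_comap_sub_one_iff :
      U.map L.subtype ≤ (W.map L.subtype).comap (f - 1) ↔ U ≤ W.comap (f.restrict hL - 1) :=
    map_le_comap_iff rfl
  have finrank_map (N : Submodule F L) : finrank F (N.map L.subtype) = finrank F N :=
    Submodule.finrank_map_subtype_eq L N
  have map_le_map_iff : W.map L.subtype ≤ U.map L.subtype ↔ W ≤ U :=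
    Submodule.map_le_map_iff_of_injective L.subtype_injective W U
  constructor
  · rintro ⟨hle, hW, hU, hdim, hone⟩
    exact ⟨map_le_map_iff.2 hle, map_mem_iff.2 hW, map_mem_iff.2 hU,
      by rwa [finrank_map, finrank_map], fun ht => map_le_comap_sub_one_iff.2 (hone ht)⟩
  · rintro ⟨hle, hW, hU, hdim, hone⟩
    exact ⟨map_le_map_iff.1 hle, map_mem_iff.1 hW, map_mem_iff.1 hU,
      by rwa [finrank_map, finrank_map] at hdim, fun ht => map_le_comap_sub_one_iff.1 (hone ht)⟩

theorem card_isFlagStep_isFlagStep_top_le_of_isSelfAdjoint [Finite V] {f : End F V}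
    {B : LinearMap.BilinForm F V} (hB : B.IsRefl) (hf : B.IsSelfAdjoint f) (s t : ℕ × Bool) :
    Nat.card {U // IsFlagStep f s (LinearMap.ker B) U ∧ IsFlagStep f t U ⊤} ≤
      Nat.card {U // IsFlagStep f t (LinearMap.ker B) U ∧ IsFlagStep f s U ⊤} := by
  have orthogonal_top : B.orthogonal ⊤ = LinearMap.ker B :=
    LinearMap.BilinForm.orthogonal_top_eq_ker hB
  have orthogonal_ker : B.orthogonal (LinearMap.ker B) = ⊤ := by
    rw [← orthogonal_top, orthogonal_orthogonal_of_ker_le hB le_top]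
  refine Nat.card_le_card_of_injective (fun U => ⟨B.orthogonal U, ?_, ?_⟩) fun U U' h => ?_
  · have step := U.2.2.orthogonal hf U.2.1.le
    rwa [orthogonal_top] at step
  · have step := U.2.1.orthogonal hf le_rfl
    rwa [orthogonal_ker] at step
  · have h' : B.orthogonal U.1 = B.orthogonal U'.1 := congrArg Subtype.val h
    rw [Subtype.ext_iff, ← orthogonal_orthogonal_of_ker_le hB U.2.1.le, h',
      orthogonal_orthogonal_of_ker_le hB U'.2.1.le]

theorem card_isFlagStep_isFlagStep_top_le [Finite V] {f : End F V} {W : Submodule F V}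
    (hW : W ∈ f.invtSubmodule) (s t : ℕ × Bool) :
    Nat.card {U // IsFlagStep f s W U ∧ IsFlagStep f t U ⊤} ≤
      Nat.card {U // IsFlagStep f t W U ∧ IsFlagStep f s U ⊤} := by
  obtain ⟨B, hsymm, rfl, hf⟩ := exists_bilinForm_isSelfAdjoint_ker_eq hW
  exact card_isFlagStep_isFlagStep_top_le_of_isSelfAdjoint hsymm.isRefl hf s t

theorem card_isFlagStep_isFlagStep_restrict {f : End F V} {L : Submodule F V}
    (hL : ∀ x ∈ L, f x ∈ L) (W : Submodule F L) (s t : ℕ × Bool) :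
    Nat.card {U // IsFlagStep (f.restrict hL) s W U ∧ IsFlagStep (f.restrict hL) t U ⊤} =
      Nat.card {U // IsFlagStep f s (W.map L.subtype) U ∧ IsFlagStep f t U L} := by
  simp only [isFlagStep_restrict_iff, Submodule.map_subtype_top]
  refine Nat.card_congr (Equiv.ofBijective (fun U => ⟨U.1.map L.subtype, U.2⟩)
    ⟨fun U U' h => Subtype.ext ?_, fun ⟨U, hU⟩ => ?_⟩)
  · exact Submodule.map_injective_of_injective L.subtype_injective (congrArg Subtype.val h)
  · have map_comap : (U.submoduleOf L).map L.subtype = U := by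
      rw [Submodule.submoduleOf, Submodule.map_comap_subtype, inf_eq_right.2 hU.2.le]
    exact ⟨⟨U.submoduleOf L, by rwa [map_comap]⟩, Subtype.ext map_comap⟩

theorem card_isFlagStep_isFlagStep_le [Finite V] (f : End F V) (s t : ℕ × Bool)
    (W L : Submodule F V) :
    Nat.card {U // IsFlagStep f s W U ∧ IsFlagStep f t U L} ≤
      Nat.card {U // IsFlagStep f t W U ∧ IsFlagStep f s U L} := by
  rcases isEmpty_or_nonempty {U // IsFlagStep f s W U ∧ IsFlagStep f t U L} with h | ⟨U₀, h₁, h₂⟩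
  · rw [Nat.card_of_isEmpty]
    exact Nat.zero_le _
  have hL : ∀ x ∈ L, f x ∈ L := h₂.right_mem
  obtain ⟨W, rfl⟩ : ∃ W' : Submodule F L, W'.map L.subtype = W :=
    ⟨W.submoduleOf L, by
      rw [Submodule.submoduleOf, Submodule.map_comap_subtype, inf_eq_right.2 (h₁.le.trans h₂.le)]⟩
  have hW : W ∈ End.invtSubmodule (f.restrict hL) := fun x hx => by
    obtain ⟨y, hy, hyx⟩ := h₁.left_mem (Submodule.mem_map_of_mem hx)
    have restrict_apply : f.restrict hL x = y := Subtype.ext hyx.symm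
    exact Submodule.mem_comap.2 (restrict_apply ▸ hy)
  rw [← card_isFlagStep_isFlagStep_restrict hL, ← card_isFlagStep_isFlagStep_restrict hL]
  exact card_isFlagStep_isFlagStep_top_le hW s t

theorem card_isFlagStep_isFlagStep_comm [Finite V] (f : End F V) (s t : ℕ × Bool)
    (W L : Submodule F V) :
    Nat.card {U // IsFlagStep f s W U ∧ IsFlagStep f t U L} =
      Nat.card {U // IsFlagStep f t W U ∧ IsFlagStep f s U L} :=
  (card_isFlagStep_isFlagStep_le f s t W L).antisymm (card_isFlagStep_isFlagStep_le f t s W L)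

end FlagStep

section RelChain

variable {ι : Type*}

/-- The chains `a = c 0, c 1, …, c k = b` whose `i`-th step is in the relation `R i`. -/
def RelChain {k : ℕ} (R : Fin k → ι → ι → Prop) (a b : ι) : Type _ :=
  {c : Fin (k + 1) → ι // c 0 = a ∧ c (Fin.last k) = b ∧ ∀ i, R i (c i.castSucc) (c i.succ)}

instance [Finite ι] {k : ℕ} (R : Fin k → ι → ι → Prop) (a b : ι) :
    Finite (RelChain R a b) :=
  inferInstanceAs (Finite (Subtype _))

/-- Splitting off the first step of a chain. -/
def RelChain.consEquiv {k : ℕ} (R : Fin (k + 1) → ι → ι → Prop) (a b : ι) :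
    RelChain R a b ≃ Σ u : {u // R 0 a u}, RelChain (fun i : Fin k => R i.succ) u b where
  toFun c := ⟨⟨c.1 1, by simpa [c.2.1] using c.2.2.2 0⟩,
    ⟨Fin.tail c.1, rfl, c.2.2.1, fun i => c.2.2.2 i.succ⟩⟩
  invFun c := ⟨Fin.cons a c.2.1, rfl, c.2.2.2.1,
    Fin.cases (by simpa [c.2.2.1] using c.1.2) fun i => by simpa using c.2.2.2.2 i⟩
  left_inv := by
    rintro ⟨c, rfl, h⟩
    exact Subtype.ext (Fin.cons_self_tail c)
  right_inv := by
    rintro ⟨⟨u, hu⟩, c, hc, h⟩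
    obtain rfl : c 0 = u := hc
    rfl

theorem RelChain.card_zero [DecidableEq ι] (R : Fin 0 → ι → ι → Prop) (a b : ι) :
    Nat.card (RelChain R a b) = if a = b then 1 else 0 := by
  split_ifs with h
  · subst h
    refine Nat.card_eq_one_iff_unique.2
      ⟨⟨fun c d => Subtype.ext (funext fun i => ?_)⟩, ⟨⟨fun _ => a, rfl, rfl, fun i => i.elim0⟩⟩⟩
    rw [Fin.eq_zero i, c.2.1, d.2.1]
  · have : IsEmpty (RelChain R a b) := ⟨fun c => h (c.2.1.symm.trans c.2.2.1)⟩
    exact Nat.card_of_isEmpty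

open scoped Classical in
/-- The adjacency matrix of a relation. -/
noncomputable def relMatrix (R : ι → ι → Prop) : Matrix ι ι ℕ :=
  Matrix.of fun a b => if R a b then 1 else 0

theorem relMatrix_mul_apply [Fintype ι] (R S : ι → ι → Prop) (a b : ι) :
    (relMatrix R * relMatrix S) a b = Nat.card {u // R a u ∧ S u b} := by
  classical
  rw [Nat.card_eq_fintype_card, Fintype.card_subtype, Finset.card_filter, Matrix.mul_apply]
  refine Finset.sum_congr rfl fun u _ => ?_
  simp only [relMatrix, Matrix.of_apply, ite_and, ite_mul, one_mul, zero_mul]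

theorem relMatrix_mul_apply_eq_sum [Fintype ι] (R : ι → ι → Prop) (M : Matrix ι ι ℕ) (a b : ι)
    [Fintype {u // R a u}] : (relMatrix R * M) a b = ∑ u : {u // R a u}, M u b := by
  classical
  simp only [Matrix.mul_apply, relMatrix, Matrix.of_apply, ite_mul, one_mul, zero_mul]
  rw [← Finset.sum_filter]
  exact Finset.sum_subtype (p := R a) _ (fun u => by simp) fun u => M u b

open scoped Classical in
theorem RelChain.card_eq_list_prod_relMatrix [Fintype ι] {k : ℕ}
    (R : Fin k → ι → ι → Prop) (a b : ι) :
    Nat.card (RelChain R a b) = (List.ofFn fun i => relMatrix (R i)).prod a b := by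
  induction k generalizing a with
  | zero => rw [card_zero, List.ofFn_zero, List.prod_nil, Matrix.one_apply]
  | succ k ih =>
    rw [List.ofFn_succ, List.prod_cons, relMatrix_mul_apply_eq_sum,
      Nat.card_congr (consEquiv R a b), Nat.card_sigma]
    simp only [ih]

theorem RelChain.card_eq_of_perm [Finite ι] {κ : Type*} {R : κ → ι → ι → Prop}
    (hR : ∀ s t a b, Nat.card {u // R s a u ∧ R t u b} = Nat.card {u // R t a u ∧ R s u b})
    {k l : ℕ} {s : Fin k → κ} {t : Fin l → κ} (hst : (List.ofFn s).Perm (List.ofFn t)) (a b : ι) :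
    Nat.card (RelChain (fun i => R (s i)) a b) = Nat.card (RelChain (fun i => R (t i)) a b) := by
  classical
  have := Fintype.ofFinite ι
  have commute (s t : κ) : Commute (relMatrix (R s)) (relMatrix (R t)) := by
    ext a b
    rw [relMatrix_mul_apply, relMatrix_mul_apply, hR]
  have hprod := (hst.map fun t => relMatrix (R t)).prod_eq'
    (List.pairwise_map.2 (List.pairwise_of_forall commute))
  rw [List.map_ofFn, List.map_ofFn] at hprod
  rw [card_eq_list_prod_relMatrix, card_eq_list_prod_relMatrix]
  exact congrFun₂ hprod a b

end RelChain

section TransitiveSubset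

open Finset

theorem exists_forall_eq_iff_card_mul_sum_sq_eq {X : Type*} [Fintype X] (a : X → ℕ) :
    (∃ r, ∀ x, a x = r) ↔ Fintype.card X * ∑ x, a x ^ 2 = (∑ x, a x) ^ 2 := by
  have variance : ∑ x, ∑ y, ((a x : ℤ) - a y) ^ 2 =
      2 * (Fintype.card X * ∑ x, (a x : ℤ) ^ 2 - (∑ x, (a x : ℤ)) ^ 2) := by
    simp only [sub_sq, sum_add_distrib, sum_sub_distrib, sum_const, card_univ, nsmul_eq_mul,
      ← mul_sum, ← sum_mul]
    ring
  constructor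
  · rintro ⟨r, hr⟩
    simp only [hr, sum_const, card_univ, smul_eq_mul]
    ring
  · intro h
    have h' : (Fintype.card X : ℤ) * ∑ x, (a x : ℤ) ^ 2 = (∑ x, (a x : ℤ)) ^ 2 := by
      exact_mod_cast h
    rw [h', sub_self, mul_zero, ← Fintype.sum_prod_type',
      sum_eq_zero_iff_of_nonneg fun _ _ => sq_nonneg _] at variance
    have eq (x y : X) : a x = a y := by
      have := variance (x, y) (mem_univ _)
      rwa [sq_eq_zero_iff, sub_eq_zero, Nat.cast_inj] at this
    rcases isEmpty_or_nonempty X with hX | ⟨⟨x₀⟩⟩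
    · exact ⟨0, hX.elim⟩
    · exact ⟨a x₀, fun x => eq x x₀⟩

/-- A subset `Y` of a group acting on `X` is transitive on `X` if the number of elements of `Y`
mapping `x` to `y` is the same for all `x` and `y` in `X`. -/
def IsTransitiveSubset {G : Type*} [Group G] (Y : Set G) (X : Type*) [MulAction G X] : Prop :=
  ∃ r : ℕ, ∀ x y : X, Nat.card {g // g ∈ Y ∧ g • x = y} = r

variable {G : Type*} [Group G] {X : Type*} [MulAction G X]

theorem sum_card_smul_eq [Fintype X] (Y : Finset G) :
    ∑ p : X × X, Nat.card {g // g ∈ Y ∧ g • p.1 = p.2} = #Y * Fintype.card X := by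
  classical
  have card_filter_eq (x y : X) : Nat.card {g // g ∈ Y ∧ g • x = y} = #{g ∈ Y | g • x = y} :=
    Nat.subtype_card _ (by simp)
  have sum_fibers (x : X) : ∑ y, #{g ∈ Y | g • x = y} = #Y :=
    (card_eq_sum_card_fiberwise fun _ _ => mem_univ _).symm
  simp only [Fintype.sum_prod_type, card_filter_eq, sum_fibers, sum_const, card_univ, smul_eq_mul,
    mul_comm]

theorem sum_card_smul_eq_sq [Fintype X] (Y : Finset G) :
    ∑ p : X × X, Nat.card {g // g ∈ Y ∧ g • p.1 = p.2} ^ 2 =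
      ∑ g ∈ Y, ∑ h ∈ Y, Nat.card (MulAction.fixedBy X (h⁻¹ * g)) := by
  classical
  have card_eq_sum (x y : X) :
      Nat.card {g // g ∈ Y ∧ g • x = y} = ∑ g ∈ Y, if g • x = y then 1 else 0 := by
    rw [← card_filter]
    exact Nat.subtype_card _ (by simp)
  have card_fixedBy (g h : G) : Nat.card (MulAction.fixedBy X (h⁻¹ * g)) =
      ∑ x : X, if h • x = g • x then 1 else 0 := by
    rw [← card_filter]
    exact Nat.subtype_card _ fun x => by simp [mul_smul, inv_smul_eq_iff, @eq_comm _ (g • x)]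
  calc
    _ = ∑ x : X, ∑ y : X, ∑ g ∈ Y, ∑ h ∈ Y,
        (if g • x = y then 1 else 0) * (if h • x = y then 1 else 0) := by
      simp only [Fintype.sum_prod_type, card_eq_sum, sq, sum_mul_sum]
    _ = ∑ g ∈ Y, ∑ h ∈ Y, ∑ x : X, ∑ y : X,
        (if g • x = y then 1 else 0) * (if h • x = y then 1 else 0) := by
      simp only [sum_comm (s := (univ : Finset X)) (t := Y)]
    _ = _ := by simp only [card_fixedBy, ite_mul, one_mul, zero_mul, sum_ite_eq, mem_univ, if_true]

theorem isTransitiveSubset_iff_sum_card_fixedBy [Finite X] (Y : Finset G) :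
    IsTransitiveSubset (Y : Set G) X ↔
      Nat.card X ^ 2 * ∑ g ∈ Y, ∑ h ∈ Y, Nat.card (MulAction.fixedBy X (h⁻¹ * g)) =
        (#Y * Nat.card X) ^ 2 := by
  have := Fintype.ofFinite X
  rw [← sum_card_smul_eq_sq, Nat.card_eq_fintype_card, ← sum_card_smul_eq, sq (Fintype.card X),
    ← Fintype.card_prod, ← exists_forall_eq_iff_card_mul_sum_sq_eq]
  simp only [IsTransitiveSubset, Prod.forall, mem_coe]

theorem isTransitiveSubset_congr_of_card_fixedBy_eq [Finite X] {X' : Type*} [MulAction G X']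
    [Finite X'] {Y : Set G} (hY : Y.Finite)
    (h : ∀ g : G, Nat.card (MulAction.fixedBy X g) = Nat.card (MulAction.fixedBy X' g)) :
    IsTransitiveSubset Y X ↔ IsTransitiveSubset Y X' := by
  have card_eq : Nat.card X = Nat.card X' := by
    simpa only [MulAction.fixedBy_one_eq_univ, Nat.card_univ] using h 1
  lift Y to Finset G using hY
  simp only [isTransitiveSubset_iff_sum_card_fixedBy, h, card_eq]

end TransitiveSubset

section BasesOfQuotients

variable {F V : Type*} [Field F] [AddCommGroup V] [Module F V]

theorem card_linearIndependent_eq_card_GL [Finite F] [FiniteDimensional F V] {a : ℕ}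
    (ha : finrank F V = a) :
    Nat.card {b : Fin a → V // LinearIndependent F b} = Nat.card (GL (Fin a) F) := by
  have := Fintype.ofFinite F
  have : Finite V := Module.finite_of_finite F
  have := Fintype.ofFinite V
  rw [card_linearIndependent ha.ge, Matrix.card_GL_field, ha]

theorem finrank_map_mkQ_add_finrank [FiniteDimensional F V] {W U : Submodule F V} (hWU : W ≤ U) :
    finrank F (U.map W.mkQ) + finrank F W = finrank F U := by
  have h := (W.mkQ.domRestrict U).finrank_range_add_finrank_ker
  rwa [LinearMap.range_domRestrict, LinearMap.ker_domRestrict, Submodule.ker_mkQ,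
    ← Submodule.submoduleOf, (Submodule.submoduleOfEquivOfLe hWU).finrank_eq] at h

theorem sup_span_range_eq_of_linearIndependent_mkQ [FiniteDimensional F V] {W U : Submodule F V}
    (hWU : W ≤ U) {a : ℕ} (ha : finrank F U = finrank F W + a) {b : Fin a → V}
    (hbU : ∀ m, b m ∈ U) (hb : LinearIndependent F fun m => W.mkQ (b m)) :
    W ⊔ Submodule.span F (Set.range b) = U := by
  have map_sup : (W ⊔ Submodule.span F (Set.range b)).map W.mkQ =
      Submodule.span F (Set.range fun m => W.mkQ (b m)) := by
    rw [Submodule.map_sup, Submodule.mkQ_map_self, bot_sup_eq, Submodule.map_span, ← Set.range_comp]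
    rfl
  refine Submodule.eq_of_le_of_finrank_eq
    (sup_le hWU (Submodule.span_le.2 (Set.range_subset_iff.2 hbU))) ?_
  rw [← finrank_map_mkQ_add_finrank le_sup_left, map_sup, finrank_span_eq_card hb, ha,
    Fintype.card_fin, add_comm]

end BasesOfQuotients

section Flags

variable {F : Type} [Field F] {q n : ℕ} {α β : SigmaNQ q n} {g h : GL (Fin n) F}

theorem glMap_one : glMap F (1 : GL (Fin n) F) = LinearMap.id := by
  rw [glMap, Units.val_one, Matrix.mulVecLin_one]

theorem glMap_mul (g h : GL (Fin n) F) : glMap F (g * h) = glMap F g ∘ₗ glMap F h := by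
  rw [glMap, Units.val_mul, Matrix.mulVecLin_mul]
  rfl

/-- `glMap` as a linear equivalence. -/
def glEquiv (g : GL (Fin n) F) : (Fin n → F) ≃ₗ[F] (Fin n → F) :=
  LinearMap.GeneralLinearGroup.toLinearEquiv (Matrix.GeneralLinearGroup.toLin g)

theorem glEquiv_toLinearMap (g : GL (Fin n) F) : (glEquiv g : (Fin n → F) →ₗ[F] _) = glMap F g :=
  rfl

theorem finrank_map_glMap (g : GL (Fin n) F) (W : Submodule F (Fin n → F)) :
    finrank F (W.map (glMap F g)) = finrank F W :=
  (glEquiv g).finrank_map_eq W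

theorem map_glMap_eq_self_iff (W : Submodule F (Fin n → F)) :
    W.map (glMap F g) = W ↔ W ∈ End.invtSubmodule (glMap F g) := by
  rw [End.mem_invtSubmodule, ← Submodule.map_le_iff_le_comap]
  exact ⟨fun h => h.le, fun h => Submodule.eq_of_le_of_finrank_eq h (finrank_map_glMap g W)⟩

theorem MapsAlphaFlag.refl (A : AlphaFlag F α) : MapsAlphaFlag F 1 A A := by
  simp [MapsAlphaFlag, glMap_one]

theorem MapsAlphaFlag.trans {A C D : AlphaFlag F α} (hAC : MapsAlphaFlag F g A C)
    (hCD : MapsAlphaFlag F h C D) : MapsAlphaFlag F (h * g) A D := by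
  refine ⟨fun j => by rw [glMap_mul, Submodule.map_comp, hAC.1, hCD.1], fun i hi m => ?_⟩
  have hmem : glMap F h (glMap F g (A.B i hi m) - C.B i hi m) ∈ D.V i.castSucc := by
    rw [← hCD.1]
    exact Submodule.mem_map_of_mem (hAC.2 i hi m)
  simpa [glMap_mul] using add_mem hmem (hCD.2 i hi m)

theorem MapsAlphaFlag.symm {A C : AlphaFlag F α} (hAC : MapsAlphaFlag F g A C) :
    MapsAlphaFlag F g⁻¹ C A := by
  have inv_comp : glMap F g⁻¹ ∘ₗ glMap F g = LinearMap.id := by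
    rw [← glMap_mul, inv_mul_cancel, glMap_one]
  have map_inv (j) : (C.V j).map (glMap F g⁻¹) = A.V j := by
    rw [← hAC.1, ← Submodule.map_comp, inv_comp, Submodule.map_id]
  refine ⟨map_inv, fun i hi m => ?_⟩
  have hmem : glMap F g⁻¹ (glMap F g (A.B i hi m) - C.B i hi m) ∈ A.V i.castSucc := by
    rw [← map_inv]
    exact Submodule.mem_map_of_mem (hAC.2 i hi m)
  rw [map_sub, ← LinearMap.comp_apply, inv_comp, LinearMap.id_apply] at hmem
  exact sub_mem_comm_iff.1 hmem

/-- The image of an `α`-flag under `g`. -/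
def AlphaFlag.map (g : GL (Fin n) F) (A : AlphaFlag F α) : AlphaFlag F α where
  V j := (A.V j).map (glMap F g)
  mono _ _ h := Submodule.map_mono (A.mono h)
  bot_eq := by rw [A.bot_eq, Submodule.map_bot]
  top_eq := by rw [A.top_eq, Submodule.map_top, ← glEquiv_toLinearMap, LinearEquiv.range]
  dim i := by rw [finrank_map_glMap, finrank_map_glMap, A.dim]
  B i hi m := glMap F g (A.B i hi m)
  B_mem i hi m := Submodule.mem_map_of_mem (A.B_mem i hi m)
  B_indep i hi := (A.B_indep i hi).map' (Submodule.Quotient.equiv (A.V i.castSucc)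
    ((A.V i.castSucc).map (glMap F g)) (glEquiv g) rfl).toLinearMap (LinearEquiv.ker _)

theorem AlphaFlag.mapsAlphaFlag_map (g : GL (Fin n) F) (A : AlphaFlag F α) :
    MapsAlphaFlag F g A (A.map g) :=
  ⟨fun _ => rfl, fun i hi m => by simp [AlphaFlag.map]⟩

/-- Two `α`-flags are equivalent if they differ only in the representatives of the bases. -/
instance AlphaFlag.setoid (F : Type) [Field F] (α : SigmaNQ q n) : Setoid (AlphaFlag F α) where
  r := MapsAlphaFlag F 1
  iseqv := ⟨.refl, fun h => by simpa using h.symm, fun h₁ h₂ => by simpa using h₁.trans h₂⟩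

/-- The `(ρ, I)`-flags of the paper, in which the bases consist of elements of the quotients
and not of representatives. -/
abbrev FlagClass (F : Type) [Field F] (α : SigmaNQ q n) : Type := Quotient (AlphaFlag.setoid F α)

theorem mapsAlphaFlag_iff_map_equiv {A C : AlphaFlag F α} :
    MapsAlphaFlag F g A C ↔ A.map g ≈ C :=
  ⟨fun hAC => show MapsAlphaFlag F 1 _ _ by simpa using (A.mapsAlphaFlag_map g).symm.trans hAC,
    fun hAC => by simpa using (A.mapsAlphaFlag_map g).trans hAC⟩

instance : MulAction (GL (Fin n) F) (FlagClass F α) where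
  smul g := Quotient.map (AlphaFlag.map g) fun A C hAC => mapsAlphaFlag_iff_map_equiv.1 <| by
    simpa using MapsAlphaFlag.trans hAC (C.mapsAlphaFlag_map g)
  one_smul := Quotient.ind fun A => Quotient.sound <|
    mapsAlphaFlag_iff_map_equiv.1 (.refl A)
  mul_smul g h := Quotient.ind fun A => Quotient.sound <|
    mapsAlphaFlag_iff_map_equiv.1 ((A.mapsAlphaFlag_map h).trans ((A.map h).mapsAlphaFlag_map g))

theorem FlagClass.smul_mk_eq_mk_iff {A C : AlphaFlag F α} :
    g • (⟦A⟧ : FlagClass F α) = ⟦C⟧ ↔ MapsAlphaFlag F g A C :=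
  Quotient.eq.trans mapsAlphaFlag_iff_map_equiv.symm

instance [Finite F] : Finite (AlphaFlag F α) :=
  Finite.of_injective (fun A => (A.V, A.B)) fun A C h => by
    cases A
    cases C
    cases h
    rfl

theorem transitiveOnAlphaFlags_iff_isTransitiveSubset [Fintype F] {Y : Set (GL (Fin n) F)} :
    TransitiveOnAlphaFlags F Y α ↔ IsTransitiveSubset Y (FlagClass F α) := by
  simp only [TransitiveOnAlphaFlags, IsTransitiveSubset, Quotient.forall,
    FlagClass.smul_mk_eq_mk_iff]

/-- The sizes of the parts of `α`, together with their membership in `I`. -/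
def SigmaNQ.steps (α : SigmaNQ q n) (i : Fin α.ρ.length) : ℕ × Bool :=
  (α.ρ.blocksFun i, decide (i ∈ α.I))

theorem SigmaNQ.coe_ofFn_steps (α : SigmaNQ q n) :
    (List.ofFn α.steps : Multiset (ℕ × Bool)) =
      α.typeSigma.map (·, true) + α.typeTau.map (·, false) := by
  have univ_val : (Finset.univ : Finset (Fin α.ρ.length)).val = α.I.val + α.Iᶜ.val := by
    rw [← Finset.disjUnion_val α.I α.Iᶜ disjoint_compl_right, Finset.disjUnion_eq_union,
      Finset.union_compl]
  rw [← Fin.univ_val_map, univ_val, Multiset.map_add, typeSigma, typeTau, Multiset.map_map,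
    Multiset.map_map]
  congr 1 <;> exact Multiset.map_congr rfl fun i hi => by simpa [steps] using hi

/-- The chains of `g`-invariant subspaces underlying the `(ρ, I)`-flags fixed by `g`. -/
abbrev FixedChain (g : GL (Fin n) F) (α : SigmaNQ q n) : Type :=
  RelChain (fun i => IsFlagStep (glMap F g) (α.steps i)) ⊥ ⊤

theorem card_fixedChain_eq [Finite F] (g : GL (Fin n) F) (hσ : α.typeSigma = β.typeSigma)
    (hτ : α.typeTau = β.typeTau) : Nat.card (FixedChain g α) = Nat.card (FixedChain g β) := by
  refine RelChain.card_eq_of_perm (card_isFlagStep_isFlagStep_comm (glMap F g)) ?_ ⊥ ⊤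
  rw [← Multiset.coe_eq_coe, α.coe_ofFn_steps, β.coe_ofFn_steps, hσ, hτ]

theorem MapsAlphaFlag.isFlagStep {A : AlphaFlag F α} (h : MapsAlphaFlag F g A A)
    (i : Fin α.ρ.length) : IsFlagStep (glMap F g) (α.steps i) (A.V i.castSucc) (A.V i.succ) where
  le := A.mono (Fin.castSucc_le_succ i)
  left_mem := (map_glMap_eq_self_iff _).1 (h.1 _)
  right_mem := (map_glMap_eq_self_iff _).1 (h.1 _)
  finrank_eq := A.dim i
  le_comap_sub_one hmarked := by
    have hi : i ∈ α.I := of_decide_eq_true hmarked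
    have hinv := (map_glMap_eq_self_iff _).1 (h.1 i.castSucc)
    rw [← sup_span_range_eq_of_linearIndependent_mkQ (A.mono (Fin.castSucc_le_succ i)) (A.dim i)
      (A.B_mem i hi) (A.B_indep i hi), sup_le_iff, Submodule.span_le]
    exact ⟨fun x hx => (A.V i.castSucc).sub_mem (hinv hx) hx, Set.range_subset_iff.2 (h.2 i hi)⟩

/-- The choices of ordered bases for the quotients of a chain of subspaces that are marked by
`α`. -/
abbrev QuotientBases (α : SigmaNQ q n) (c : Fin (α.ρ.length + 1) → Submodule F (Fin n → F)) :
    Type :=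
  ∀ i : α.I, {b : Fin (α.ρ.blocksFun i) → (c i.1.succ).map (c i.1.castSucc).mkQ //
    LinearIndependent F b}

theorem card_quotientBases [Finite F] (c : FixedChain g α) :
    Nat.card (QuotientBases α c.1) = (α.typeSigma.map fun a => Nat.card (GL (Fin a) F)).prod := by
  have finrank_quotient (i : Fin α.ρ.length) :
      finrank F ((c.1 i.succ).map (c.1 i.castSucc).mkQ) = α.ρ.blocksFun i := by
    have step := c.2.2.2 i
    have := finrank_map_mkQ_add_finrank step.le
    rw [step.finrank_eq, add_comm] at this
    exact add_left_cancel this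
  simp only [QuotientBases, Nat.card_pi, card_linearIndependent_eq_card_GL (finrank_quotient _)]
  rw [SigmaNQ.typeSigma, Multiset.map_map]
  exact Finset.prod_coe_sort α.I fun i => Nat.card (GL (Fin (α.ρ.blocksFun i)) F)

theorem exists_alphaFlag_of_fixedChain (c : FixedChain g α) (b : QuotientBases α c.1) :
    ∃ A : AlphaFlag F α, A.V = c.1 ∧
      ∀ i hi m, (c.1 i.castSucc).mkQ (A.B i hi m) = (b ⟨i, hi⟩).1 m := by
  have mem_map (i hi m) := ((b ⟨i, hi⟩).1 m).2
  choose B hB hBb using mem_map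
  exact ⟨{
    V := c.1
    mono := Fin.monotone_iff_le_succ.2 fun i => (c.2.2.2 i).le
    bot_eq := c.2.1
    top_eq := c.2.2.1
    dim := fun i => (c.2.2.2 i).finrank_eq
    B := B
    B_mem := hB
    B_indep := fun i hi => by
      simp only [hBb]
      exact (b ⟨i, hi⟩).2.map' (Submodule.subtype _) (Submodule.ker_subtype _) }, rfl, hBb⟩

theorem mapsAlphaFlag_one_iff {A C : AlphaFlag F α} :
    MapsAlphaFlag F 1 A C ↔
      A.V = C.V ∧ ∀ i hi m, A.B i hi m - C.B i hi m ∈ C.V i.castSucc := by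
  simp only [MapsAlphaFlag, glMap_one, Submodule.map_id, LinearMap.id_apply, funext_iff]

theorem mapsAlphaFlag_self_iff {A : AlphaFlag F α} :
    MapsAlphaFlag F g A A ↔
      ∀ i, IsFlagStep (glMap F g) (α.steps i) (A.V i.castSucc) (A.V i.succ) := by
  refine ⟨MapsAlphaFlag.isFlagStep, fun h => ⟨fun j => ?_, fun i hi m => ?_⟩⟩
  · cases j using Fin.cases with
    | zero => rw [A.bot_eq, Submodule.map_bot]
    | succ i => exact (map_glMap_eq_self_iff _).2 (h i).right_mem
  · exact (h i).le_comap_sub_one (decide_eq_true hi) (A.B_mem i hi m)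

theorem nonempty_sigma_quotientBases_equiv_fixedBy (g : GL (Fin n) F) (α : SigmaNQ q n) :
    Nonempty ((Σ c : FixedChain g α, QuotientBases α c.1) ≃
      MulAction.fixedBy (FlagClass F α) g) := by
  choose toFlag toFlag_V mkQ_toFlag_B using exists_alphaFlag_of_fixedChain (g := g) (α := α)
  have fixed (d : Σ c : FixedChain g α, QuotientBases α c.1) :
      (⟦toFlag d.1 d.2⟧ : FlagClass F α) ∈ MulAction.fixedBy (FlagClass F α) g := by
    rw [MulAction.mem_fixedBy, FlagClass.smul_mk_eq_mk_iff, mapsAlphaFlag_self_iff, toFlag_V]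
    exact d.1.2.2.2
  refine ⟨Equiv.ofBijective (fun d => ⟨_, fixed d⟩) ⟨?_, ?_⟩⟩
  · rintro ⟨c, b⟩ ⟨c', b'⟩ h
    obtain ⟨hV, hB⟩ := mapsAlphaFlag_one_iff.1 (Quotient.exact (congrArg Subtype.val h))
    rw [toFlag_V, toFlag_V] at hV
    obtain rfl : c = c' := Subtype.ext hV
    congr 1
    funext i
    ext m : 3
    have := hB i.1 i.2 m
    rwa [toFlag_V, ← Submodule.ker_mkQ (c.1 i.1.castSucc), LinearMap.sub_mem_ker_iff,
      mkQ_toFlag_B, mkQ_toFlag_B] at this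
  · rintro ⟨⟨A⟩, hA⟩
    have step := mapsAlphaFlag_self_iff.1 (FlagClass.smul_mk_eq_mk_iff.1 hA)
    let c : FixedChain g α := ⟨A.V, A.bot_eq, A.top_eq, step⟩
    let b : QuotientBases α c.1 := fun i =>
      ⟨fun m => ⟨_, Submodule.mem_map_of_mem (A.B_mem i.1 i.2 m)⟩,
        .of_comp (Submodule.subtype _) (A.B_indep i.1 i.2)⟩
    refine ⟨⟨c, b⟩, Subtype.ext (Quotient.sound (mapsAlphaFlag_one_iff.2
      ⟨toFlag_V c b, fun i hi m => ?_⟩))⟩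
    rw [← Submodule.ker_mkQ (A.V i.castSucc), LinearMap.sub_mem_ker_iff]
    exact mkQ_toFlag_B c b i hi m

theorem card_fixedBy_flagClass [Finite F] (g : GL (Fin n) F) (α : SigmaNQ q n) :
    Nat.card (MulAction.fixedBy (FlagClass F α) g) =
      Nat.card (FixedChain g α) * (α.typeSigma.map fun a => Nat.card (GL (Fin a) F)).prod := by
  obtain ⟨e⟩ := nonempty_sigma_quotientBases_equiv_fixedBy g α
  have (c : FixedChain g α) : Finite (QuotientBases α c.1) :=
    .of_injective (fun b => e ⟨c, b⟩) (e.injective.comp sigma_mk_injective)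
  have := Fintype.ofFinite (FixedChain g α)
  rw [← Nat.card_congr e, Nat.card_sigma]
  simp only [card_quotientBases, Finset.sum_const, Finset.card_univ, smul_eq_mul,
    Nat.card_eq_fintype_card]

end Flags

/-- Here `q` only enters through `SigmaNQ`: for `q ≠ 2` all pairs `(ρ, I)` are covered, also over
the field with two elements. -/
theorem statement1_general {q n : ℕ} (F : Type) [Field F] [Fintype F] (α β : SigmaNQ q n)
    (hσ : α.typeSigma = β.typeSigma) (hτ : α.typeTau = β.typeTau) (Y : Set (GL (Fin n) F)) :
    TransitiveOnAlphaFlags F Y α ↔ TransitiveOnAlphaFlags F Y β := by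
  rw [transitiveOnAlphaFlags_iff_isTransitiveSubset, transitiveOnAlphaFlags_iff_isTransitiveSubset]
  refine isTransitiveSubset_congr_of_card_fixedBy_eq Y.toFinite fun g => ?_
  rw [card_fixedBy_flagClass, card_fixedBy_flagClass, card_fixedChain_eq g hσ hτ, hσ]

/-- If `α, β ∈ Σ_{n,q}` have the same type, then `Y ⊆ GL(n,q)` is transitive on `α`-flags
iff it is transitive on `β`-flags. -/
theorem statement1 (q : ℕ) (hq : IsPrimePow q) (F : Type) [Field F] [Fintype F]
    (hF : Fintype.card F = q) (n : ℕ) (hn : 0 < n) (α β : SigmaNQ q n)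
    (hσ : α.typeSigma = β.typeSigma) (hτ : α.typeTau = β.typeTau)
    (Y : Set (GL (Fin n) F)) :
    TransitiveOnAlphaFlags F Y α ↔ TransitiveOnAlphaFlags F Y β :=
  statement1_general F α β hσ hτ Y
end
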